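/- arXiv:2502.16042 — 3 statements merged into one kernel-verified Lean document; each statement's English description precedes it below -/
import Mathlib

section
/- (Decomposition of the one-step PGD-Gauss solution.) Fix K ≥ 2 and an arm k with f_k smooth at 0. Consider a sequence of covariate matrices X⁽ⁿ⁾ ∈ ℝ^{n×d_n} with unit-norm rows and step sizes η_n > 0 with η_n ‖X⁽ⁿ⁾X⁽ⁿ⁾ᵀ − I_n‖_op → 0, and let Σ_{η_n} be the one-step PGD-Gauss solution. Then Σ_{η_n} = I_n + η_n N_n where N_n is a symmetric matrix with all diagonal entries equal to zero, and there exists a constant C such that for all sufficiently large n, ‖N_n‖_op ≤ C(‖X⁽ⁿ⁾X⁽ⁿ⁾ᵀ − I_n‖_op + η_n ‖X⁽ⁿ⁾X⁽ⁿ⁾ᵀ − I_n‖_op²). -/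
open MeasureTheory ProbabilityTheory Matrix Real Filter
open scoped BigOperators ENNReal NNReal Topology

noncomputable section

/-- The spectral (operator) norm of a square real matrix. -/
def opNorm {m : ℕ} (A : Matrix (Fin m) (Fin m) ℝ) : ℝ :=
  ‖(Matrix.toEuclideanCLM (𝕜 := ℝ) A : EuclideanSpace ℝ (Fin m) →L[ℝ] EuclideanSpace ℝ (Fin m))‖

/-- The standard normal CDF `Φ`. -/
def stdGaussianCDF (x : ℝ) : ℝ := (gaussianReal 0 1 (Set.Iic x)).toReal

/-- The function `r_{i,j}(ρ)`. -/
def rfun (q : ℕ → ℝ) (i j : ℕ) (ρ : ℝ) : ℝ :=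
  ∫ r in (0 : ℝ)..ρ,
    (2 * π * Real.sqrt (1 - r ^ 2))⁻¹ *
      Real.exp (-((q i ^ 2 + q j ^ 2 - 2 * r * q i * q j) / (2 * (1 - r ^ 2))))

/-- The function `f_k` (arms `0`-indexed: `k : Fin K` represents arm `k+1`). -/
def fkfun (q : ℕ → ℝ) (K : ℕ) (k : Fin K) (ρ : ℝ) : ℝ :=
  if k.val = 0 then rfun q 1 1 ρ
  else if k.val = K - 1 then rfun q (K - 1) (K - 1) ρ
  else rfun q k.val k.val ρ + rfun q (k.val + 1) (k.val + 1) ρ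
    - 2 * rfun q k.val (k.val + 1) ρ

/-- The one-step PGD-Gauss solution `Σ_η = D⁻¹ U² D⁻¹`, where
`U = I − η c (XXᵀ − I)` with `c = f_k′(0)` and `D` is the diagonal matrix whose `i`-th
diagonal entry is the Euclidean norm of the `i`-th row of `U`. -/
def pgd {n d : ℕ} (X : Matrix (Fin n) (Fin d) ℝ) (η c : ℝ) : Matrix (Fin n) (Fin n) ℝ :=
  let U : Matrix (Fin n) (Fin n) ℝ := 1 - (η * c) • (X * Xᵀ - 1)
  Matrix.of fun i j =>
    (U * U) i j / (Real.sqrt (∑ l, U i l ^ 2) * Real.sqrt (∑ l, U j l ^ 2))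

/-!
`Σ_η` is the correlation matrix of the covariance matrix `U²`: as `U` is symmetric, its row norms
are the square roots of the diagonal entries of `U²`. Hence `Σ_η − I = D⁻¹ (U² − diag U²) D⁻¹`.
With `A = XXᵀ − I` one has `U² = I + η B` for `B = η c² A² − 2 c A`, so `N` is `D⁻¹ B D⁻¹` with its
diagonal removed. Since `A` has zero diagonal, `U` has unit diagonal and therefore `D ≥ I`; thus
`‖N‖ ≤ 2 ‖B‖`, because removing the diagonal of a matrix at most doubles its spectral norm.
-/

section OffDiagPart

variable {ι α : Type*} [DecidableEq ι]

/-- The off-diagonal part of a square matrix: its diagonal entries are replaced by zero. It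
carries the whole deviation from the identity of a matrix with unit diagonal. -/
def offDiagPart [AddGroup α] (M : Matrix ι ι α) : Matrix ι ι α :=
  M - diagonal M.diag

@[simp]
lemma offDiagPart_apply_self [AddGroup α] (M : Matrix ι ι α) (i : ι) : offDiagPart M i i = 0 := by
  simp [offDiagPart]

lemma diagonal_add_offDiagPart [AddCommGroup α] (M : Matrix ι ι α) :
    diagonal M.diag + offDiagPart M = M :=
  add_sub_cancel _ _

lemma offDiagPart_one_add [AddCommGroupWithOne α] (M : Matrix ι ι α) :
    offDiagPart (1 + M) = offDiagPart M := by
  have hdiag : diagonal (1 + M).diag = 1 + diagonal M.diag := by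
    rw [← diagonal_one, diagonal_add, diag_add, diag_diagonal]
    rfl
  rw [offDiagPart, hdiag, add_sub_add_left_eq_sub, offDiagPart]

lemma offDiagPart_smul {R : Type*} [Monoid R] [AddGroup α] [DistribMulAction R α] (r : R)
    (M : Matrix ι ι α) : offDiagPart (r • M) = r • offDiagPart M := by
  rw [offDiagPart, diag_smul, diagonal_smul, ← smul_sub, offDiagPart]

lemma isSymm_offDiagPart [AddGroup α] {M : Matrix ι ι α} (hM : M.IsSymm) :
    (offDiagPart M).IsSymm :=
  hM.sub (isSymm_diagonal _)

end OffDiagPart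

section L2OpNorm

open scoped Matrix.Norms.L2Operator

variable {𝕜 m n : Type*} [RCLike 𝕜] [Fintype m] [Fintype n] [DecidableEq n]

lemma norm_apply_le_l2_opNorm (M : Matrix m n 𝕜) (i : m) (j : n) : ‖M i j‖ ≤ ‖M‖ := by
  calc ‖M i j‖ = ‖(WithLp.toLp 2 (M *ᵥ Pi.single j 1) : EuclideanSpace 𝕜 m) i‖ := by simp
    _ ≤ ‖(WithLp.toLp 2 (M *ᵥ Pi.single j 1) : EuclideanSpace 𝕜 m)‖ := PiLp.norm_apply_le _ i
    _ ≤ ‖M‖ * ‖EuclideanSpace.single j (1 : 𝕜)‖ := l2_opNorm_mulVec M (EuclideanSpace.single j 1)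
    _ = ‖M‖ := by simp

lemma l2_opNorm_diagonal_diag_le (M : Matrix n n 𝕜) : ‖diagonal M.diag‖ ≤ ‖M‖ := by
  rw [l2_opNorm_diagonal]
  exact (pi_norm_le_iff_of_nonneg (norm_nonneg M)).2 fun i => norm_apply_le_l2_opNorm M i i

lemma l2_opNorm_offDiagPart_le (M : Matrix n n 𝕜) : ‖offDiagPart M‖ ≤ 2 * ‖M‖ := by
  calc ‖offDiagPart M‖ ≤ ‖M‖ + ‖diagonal M.diag‖ := norm_sub_le _ _
    _ ≤ ‖M‖ + ‖M‖ := by gcongr; exact l2_opNorm_diagonal_diag_le M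
    _ = 2 * ‖M‖ := (two_mul _).symm

lemma l2_opNorm_diagonal_mul_mul_diagonal_le [DecidableEq m] (v : m → 𝕜) (M : Matrix m n 𝕜)
    (w : n → 𝕜) : ‖diagonal v * M * diagonal w‖ ≤ ‖v‖ * ‖M‖ * ‖w‖ := by
  calc ‖diagonal v * M * diagonal w‖
      ≤ ‖diagonal v * M‖ * ‖diagonal w‖ := l2_opNorm_mul _ _
    _ ≤ ‖diagonal v‖ * ‖M‖ * ‖diagonal w‖ := by gcongr; exact l2_opNorm_mul _ _
    _ = ‖v‖ * ‖M‖ * ‖w‖ := by rw [l2_opNorm_diagonal, l2_opNorm_diagonal]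

end L2OpNorm

section DiagNormalize

variable {ι : Type*} [Fintype ι]

/-- The reciprocal square roots of the diagonal entries of `M`, that is, the diagonal of the
scaling matrix which turns a covariance matrix into a correlation matrix. An entry at which the
diagonal of `M` is not positive takes the junk value `0`. -/
def invSqrtDiag (M : Matrix ι ι ℝ) (i : ι) : ℝ :=
  (√(M i i))⁻¹

lemma norm_invSqrtDiag_le_one {M : Matrix ι ι ℝ} (hM : ∀ i, 1 ≤ M i i) :
    ‖invSqrtDiag M‖ ≤ 1 := by
  refine (pi_norm_le_iff_of_nonneg zero_le_one).2 fun i => ?_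
  rw [invSqrtDiag, norm_inv, Real.norm_of_nonneg (Real.sqrt_nonneg _)]
  exact inv_le_one_of_one_le₀ (Real.one_le_sqrt.2 (hM i))

variable [DecidableEq ι]

/-- The symmetric diagonal rescaling of `M` to unit diagonal: the correlation matrix of the
covariance matrix `M`. -/
def diagNormalize (M : Matrix ι ι ℝ) : Matrix ι ι ℝ :=
  diagonal (invSqrtDiag M) * M * diagonal (invSqrtDiag M)

lemma diagNormalize_apply (M : Matrix ι ι ℝ) (i j : ι) :
    diagNormalize M i j = M i j / (√(M i i) * √(M j j)) := by
  rw [diagNormalize, mul_diagonal, diagonal_mul, invSqrtDiag, invSqrtDiag]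
  ring

lemma diagNormalize_eq_one_add {M : Matrix ι ι ℝ} (hM : ∀ i, 0 < M i i) :
    diagNormalize M =
      1 + diagonal (invSqrtDiag M) * offDiagPart M * diagonal (invSqrtDiag M) := by
  have normalize_diag :
      diagonal (invSqrtDiag M) * diagonal M.diag * diagonal (invSqrtDiag M) = 1 := by
    rw [diagonal_mul_diagonal, diagonal_mul_diagonal, diagonal_eq_one]
    funext i
    have hsqrt : √(M i i) ≠ 0 := (Real.sqrt_pos.2 (hM i)).ne'
    simp only [invSqrtDiag, diag_apply, Pi.one_apply]
    field_simp
    exact (Real.sq_sqrt (hM i).le).symm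
  calc diagNormalize M
      = diagonal (invSqrtDiag M) * (diagonal M.diag + offDiagPart M) *
          diagonal (invSqrtDiag M) := by rw [diagonal_add_offDiagPart, diagNormalize]
    _ = 1 + diagonal (invSqrtDiag M) * offDiagPart M * diagonal (invSqrtDiag M) := by
      rw [mul_add, add_mul, normalize_diag]

end DiagNormalize

section SymmetricSquare

variable {ι R : Type*} [Fintype ι] {U : Matrix ι ι R}

lemma mul_self_apply_self_of_isSymm [Semiring R] (hU : U.IsSymm) (i : ι) :
    (U * U) i i = ∑ l, U i l ^ 2 := by
  simp only [mul_apply, hU.apply i, pow_two]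

lemma sq_apply_self_le_mul_self_apply_self [Ring R] [LinearOrder R] [IsOrderedRing R]
    (hU : U.IsSymm) (i : ι) : U i i ^ 2 ≤ (U * U) i i := by
  rw [mul_self_apply_self_of_isSymm hU]
  exact Finset.single_le_sum (f := fun l => U i l ^ 2) (fun l _ => sq_nonneg _)
    (Finset.mem_univ i)

end SymmetricSquare

section Gram

variable {m n R : Type*} [Fintype n] [DecidableEq m]

lemma isSymm_gram_sub_one [CommRing R] (X : Matrix m n R) : (X * Xᵀ - 1 : Matrix m m R).IsSymm := by
  rw [IsSymm, transpose_sub, transpose_mul, transpose_transpose, transpose_one]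

lemma gram_sub_one_apply_self [Ring R] {X : Matrix m n R} (hX : ∀ i, ∑ j, X i j ^ 2 = 1) (i : m) :
    (X * Xᵀ - 1 : Matrix m m R) i i = 0 := by
  simp only [Matrix.sub_apply, mul_apply, transpose_apply, ← pow_two, hX i, one_apply_eq, sub_self]

end Gram

section PGD

variable {n d : ℕ} (X : Matrix (Fin n) (Fin d) ℝ) (η c : ℝ)

/-- The matrix `U = I − η c (XXᵀ − I)` of the one-step PGD-Gauss solution. -/
def pgdFactor : Matrix (Fin n) (Fin n) ℝ :=
  1 - (η * c) • (X * Xᵀ - 1)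

/-- The rescaled increment of `U²`: the matrix `B` with `U² = I + η B`. -/
def pgdIncrement : Matrix (Fin n) (Fin n) ℝ :=
  (η * c ^ 2) • ((X * Xᵀ - 1) * (X * Xᵀ - 1)) - (2 * c) • (X * Xᵀ - 1)

/-- The matrix `N` with `Σ_η = I + η N`. It is defined without dividing by `η`. -/
def pgdPerturbation : Matrix (Fin n) (Fin n) ℝ :=
  diagonal (invSqrtDiag (pgdFactor X η c * pgdFactor X η c)) * offDiagPart (pgdIncrement X η c) *
    diagonal (invSqrtDiag (pgdFactor X η c * pgdFactor X η c))

lemma isSymm_pgdFactor : (pgdFactor X η c).IsSymm :=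
  isSymm_one.sub ((isSymm_gram_sub_one X).smul _)

lemma isSymm_pgdIncrement : (pgdIncrement X η c).IsSymm := by
  have hA := isSymm_gram_sub_one X
  rw [pgdIncrement, ← pow_two]
  exact ((hA.pow 2).smul _).sub (hA.smul _)

lemma pgdFactor_mul_self : pgdFactor X η c * pgdFactor X η c = 1 + η • pgdIncrement X η c := by
  simp only [pgdFactor, pgdIncrement, sub_mul _ ((η * c) • _), mul_sub _ _ ((η * c) • _), one_mul,
    mul_one, smul_mul_assoc, mul_smul_comm]
  module

lemma pgd_eq_diagNormalize : pgd X η c = diagNormalize (pgdFactor X η c * pgdFactor X η c) := by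
  ext i j
  simp only [diagNormalize_apply, mul_self_apply_self_of_isSymm (isSymm_pgdFactor X η c)]
  rfl

lemma isSymm_pgdPerturbation : (pgdPerturbation X η c).IsSymm := by
  rw [pgdPerturbation, IsSymm, transpose_mul, transpose_mul, diagonal_transpose,
    (isSymm_offDiagPart (isSymm_pgdIncrement X η c)).eq, mul_assoc]

lemma pgdPerturbation_apply_self (i : Fin n) : pgdPerturbation X η c i i = 0 := by
  rw [pgdPerturbation, mul_diagonal, diagonal_mul, offDiagPart_apply_self, mul_zero, zero_mul]

open scoped Matrix.Norms.L2Operator in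
lemma opNorm_eq_l2_opNorm (A : Matrix (Fin n) (Fin n) ℝ) : opNorm A = ‖A‖ :=
  rfl

open scoped Matrix.Norms.L2Operator in
lemma opNorm_pgdIncrement_le :
    opNorm (pgdIncrement X η c) ≤
      |η| * c ^ 2 * opNorm (X * Xᵀ - 1) ^ 2 + 2 * |c| * opNorm (X * Xᵀ - 1) := by
  simp only [opNorm_eq_l2_opNorm, pgdIncrement]
  set A := X * Xᵀ - 1
  calc ‖(η * c ^ 2) • (A * A) - (2 * c) • A‖
      ≤ ‖(η * c ^ 2) • (A * A)‖ + ‖(2 * c) • A‖ := norm_sub_le _ _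
    _ = |η| * c ^ 2 * ‖A * A‖ + 2 * |c| * ‖A‖ := by simp [norm_smul]
    _ ≤ |η| * c ^ 2 * ‖A‖ ^ 2 + 2 * |c| * ‖A‖ := by
      rw [pow_two ‖A‖]
      gcongr
      exact norm_mul_le A A

variable {X}

lemma one_le_pgdFactor_mul_self_apply_self (hX : ∀ i, ∑ j, X i j ^ 2 = 1)
    (i : Fin n) : 1 ≤ (pgdFactor X η c * pgdFactor X η c) i i := by
  have factor_diag : pgdFactor X η c i i = 1 := by
    rw [pgdFactor, Matrix.sub_apply, Matrix.smul_apply, gram_sub_one_apply_self hX, smul_zero,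
      sub_zero, one_apply_eq]
  simpa only [factor_diag, one_pow] using
    sq_apply_self_le_mul_self_apply_self (isSymm_pgdFactor X η c) i

lemma pgd_eq_one_add_smul_pgdPerturbation (hX : ∀ i, ∑ j, X i j ^ 2 = 1) :
    pgd X η c = 1 + η • pgdPerturbation X η c := by
  have hpos i := zero_lt_one.trans_le (one_le_pgdFactor_mul_self_apply_self η c hX i)
  have hoff : offDiagPart (pgdFactor X η c * pgdFactor X η c) =
      η • offDiagPart (pgdIncrement X η c) := by
    rw [pgdFactor_mul_self, offDiagPart_one_add, offDiagPart_smul]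
  rw [pgd_eq_diagNormalize, diagNormalize_eq_one_add hpos, hoff, mul_smul_comm, smul_mul_assoc,
    pgdPerturbation]

open scoped Matrix.Norms.L2Operator in
lemma opNorm_pgdPerturbation_le (hX : ∀ i, ∑ j, X i j ^ 2 = 1) :
    opNorm (pgdPerturbation X η c) ≤ 2 * opNorm (pgdIncrement X η c) := by
  rw [opNorm_eq_l2_opNorm, opNorm_eq_l2_opNorm, pgdPerturbation]
  set v := invSqrtDiag (pgdFactor X η c * pgdFactor X η c)
  have hv : ‖v‖ ≤ 1 := norm_invSqrtDiag_le_one (one_le_pgdFactor_mul_self_apply_self η c hX)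
  calc ‖diagonal v * offDiagPart (pgdIncrement X η c) * diagonal v‖
      ≤ ‖v‖ * ‖offDiagPart (pgdIncrement X η c)‖ * ‖v‖ :=
        l2_opNorm_diagonal_mul_mul_diagonal_le _ _ _
    _ ≤ 1 * (2 * ‖pgdIncrement X η c‖) * 1 := by
      gcongr
      exact l2_opNorm_offDiagPart_le _
    _ = 2 * ‖pgdIncrement X η c‖ := by rw [one_mul, mul_one]

end PGD

theorem pgd_decomposition_general {n d : ℕ} (X : Matrix (Fin n) (Fin d) ℝ)
    (hX : ∀ i, ∑ j, X i j ^ 2 = 1) (η c : ℝ) :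
    ∃ N : Matrix (Fin n) (Fin n) ℝ,
      (pgd X η c = 1 + η • N ∧ N.IsSymm ∧ ∀ i, N i i = 0) ∧
      opNorm N ≤
        (4 * |c| + 2 * c ^ 2) * (opNorm (X * Xᵀ - 1) + |η| * opNorm (X * Xᵀ - 1) ^ 2) := by
  refine ⟨pgdPerturbation X η c, ⟨pgd_eq_one_add_smul_pgdPerturbation η c hX,
    isSymm_pgdPerturbation X η c, pgdPerturbation_apply_self X η c⟩, ?_⟩
  set a := opNorm (X * Xᵀ - 1)
  have ha : 0 ≤ a := norm_nonneg _
  have cross_nonneg : 0 ≤ 4 * |c| * (|η| * a ^ 2) + 2 * c ^ 2 * a := by positivity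
  calc opNorm (pgdPerturbation X η c)
      ≤ 2 * opNorm (pgdIncrement X η c) := opNorm_pgdPerturbation_le η c hX
    _ ≤ 2 * (|η| * c ^ 2 * a ^ 2 + 2 * |c| * a) := by
      gcongr
      exact opNorm_pgdIncrement_le X η c
    _ ≤ (4 * |c| + 2 * c ^ 2) * (a + |η| * a ^ 2) := by linarith

/-- **Decomposition of the one-step PGD-Gauss solution.** Under unit-norm rows
and `η_n ‖X⁽ⁿ⁾X⁽ⁿ⁾ᵀ − I‖_op → 0`, the one-step PGD-Gauss solution satisfies
`Σ_{η_n} = I + η_n N_n` where `N_n` is symmetric with zero diagonal and, for some constant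
`C` and all sufficiently large `n`,
`‖N_n‖_op ≤ C (‖XXᵀ − I‖_op + η_n ‖XXᵀ − I‖_op²)`. -/
theorem pgd_decomposition
    (K : ℕ) (hK : 2 ≤ K) (k : Fin K)
    (q : ℕ → ℝ) (hq : ∀ m : ℕ, 0 < m → m < K → stdGaussianCDF (q m) = (m : ℝ) / K)
    (d : ℕ → ℕ) (X : ∀ nn : ℕ, Matrix (Fin nn) (Fin (d nn)) ℝ)
    (hX : ∀ nn (i : Fin nn), ∑ j, X nn i j ^ 2 = 1)
    (η : ℕ → ℝ) (hη : ∀ nn, 0 < η nn)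
    (hηop : Tendsto (fun nn => η nn * opNorm (X nn * (X nn)ᵀ - 1)) atTop (𝓝 0)) :
    ∃ N : ∀ nn : ℕ, Matrix (Fin nn) (Fin nn) ℝ,
      (∀ nn, pgd (X nn) (η nn) (deriv (fkfun q K k) 0) = 1 + η nn • N nn ∧
        (N nn).IsSymm ∧ ∀ i, N nn i i = 0) ∧
      ∃ C : ℝ, ∀ᶠ nn in atTop,
        opNorm (N nn) ≤
          C * (opNorm (X nn * (X nn)ᵀ - 1) + η nn * opNorm (X nn * (X nn)ᵀ - 1) ^ 2) := by
  choose N hN hbound using fun nn => pgd_decomposition_general (X nn) (hX nn) (η nn) _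
  exact ⟨N, hN, _, .of_forall fun nn => by simpa only [abs_of_pos (hη nn)] using hbound nn⟩

end
end

section
/- (Entrywise matrix Taylor expansions of the Gaussianized covariance map.) Fix K ≥ 2 and an arm k, and let f denote f_k rescaled so that f(1) = 1 and f(0) = 0 (i.e., f = (K²/(K−1)) f_k). Let (Σ⁽ⁿ⁾) be a sequence of matrices in the correlation elliptope (the n-th of size n×n) with Δ_n = Σ⁽ⁿ⁾ − I_n (so Δ_n is symmetric with zero diagonal) and ‖Δ_n‖_op → 0. Then, with f applied entrywise: (i) f(Σ⁽ⁿ⁾) = I_n + f′(0)Δ_n + R₁ₙ with ‖R₁ₙ‖_op = O(‖Δ_n‖_op²), and ‖f(Σ⁽ⁿ⁾)‖_op = O(1); (ii) f(Σ⁽ⁿ⁾) is positive semidefinite and f(Σ⁽ⁿ⁾)^{1/2} = I_n + (1/2)f′(0)Δ_n + R₂ₙ with ‖R₂ₙ‖_op = O(‖Δ_n‖_op²); (iii) every entry of the positive semidefinite square root (Σ⁽ⁿ⁾)^{1/2} lies in [−1,1] and f((Σ⁽ⁿ⁾)^{1/2}) = I_n + (1/2)f′(0)Δ_n + R₃ₙ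 with ‖R₃ₙ‖_op = o(1) + O(‖Δ_n‖_op²). -/
open MeasureTheory ProbabilityTheory Matrix Real Filter
open scoped BigOperators ENNReal NNReal Topology

noncomputable section

/-- The rescaled covariance map `f = (K²/(K−1)) f_k`, so that `f(0) = 0` and `f(1) = 1`. -/
def fresc (q : ℕ → ℝ) (K : ℕ) (k : Fin K) (ρ : ℝ) : ℝ :=
  (K : ℝ) ^ 2 / ((K : ℝ) - 1) * fkfun q K k ρ

/-- `f` applied entrywise to a square matrix. -/
def entrywise {m : ℕ} (f : ℝ → ℝ) (A : Matrix (Fin m) (Fin m) ℝ) :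
    Matrix (Fin m) (Fin m) ℝ :=
  Matrix.of fun i j => f (A i j)

/-!
For a standard normal pair with correlation `ρ`, Plackett's formula says that the `ρ`-derivative of
the joint distribution function is the joint density, so `r_{i,j}(ρ)` is the covariance of the
indicators of `X ≤ q_i` and `Y ≤ q_j`. Hence `f(ρ)` is, up to a positive factor, the covariance of
`h(X)` and `h(Y)` for a single function `h`, which gives positive semidefiniteness of `f(Σ)` and the
behaviour of `f` at `0` and `1`.

Write `D = Σ - 1`. An entrywise remainder of size `C D_{ij}²` has row and column sums at most
`C ‖D‖²`, because these are sums of squares along a row or column of `D`; by Schur's test its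
operator norm is `O(‖D‖²)`. This turns the scalar Taylor expansion of `f` at `0` into the matrix
expansion. For a positive square root, functional calculus gives `‖A - 1‖ ≤ ‖A² - 1‖`, and then
`A - 1 - (A² - 1)/2 = -(A - 1)²/2` is quadratically small. The diagonal of `Σ^{1/2}` is not exactly
`1`, and since `f` is only continuous at `1` it contributes the `o(1)` term in the third expansion.
-/

section OperatorNorm

lemma norm_le_of_norm_sub_smul_le {E : Type*} [SeminormedAddCommGroup E] [NormedSpace ℝ E]
    {x d : E} {c C : ℝ} (hC : 0 ≤ C) (hd : ‖d‖ ≤ 1) (h : ‖x - c • d‖ ≤ C * ‖d‖ ^ 2) :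
    ‖x‖ ≤ (C + |c|) * ‖d‖ :=
  calc ‖x‖ = ‖(x - c • d) + c • d‖ := by rw [sub_add_cancel]
    _ ≤ C * ‖d‖ ^ 2 + |c| * ‖d‖ := (norm_add_le _ _).trans (by gcongr; exact norm_smul_le c d)
    _ ≤ C * ‖d‖ + |c| * ‖d‖ := by
        gcongr
        exact pow_le_of_le_one (norm_nonneg d) hd two_ne_zero
    _ = (C + |c|) * ‖d‖ := by ring

open scoped Matrix.Norms.L2Operator

-- Cauchy–Schwarz for `∑ j, √|A i j| * (√|A i j| * v j)` in each row.
lemma sq_mulVec_le_sum_abs_mul {m n : Type*} [Fintype n] (A : Matrix m n ℝ) (v : n → ℝ) (i : m) :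
    (A *ᵥ v) i ^ 2 ≤ (∑ j, |A i j|) * ∑ j, |A i j| * v j ^ 2 :=
  Finset.sum_sq_le_sum_mul_sum_of_sq_le_mul Finset.univ (fun _ _ => abs_nonneg _)
    (fun _ _ => by positivity) fun j _ => by
      rw [mul_pow, ← sq_abs (A i j), ← mul_assoc, ← sq]

variable {m n : Type*} [Fintype m] [Fintype n] [DecidableEq n]

lemma opNorm_eq_norm {k : ℕ} (A : Matrix (Fin k) (Fin k) ℝ) : opNorm A = ‖A‖ := rfl

lemma entrywise_eq_map {k : ℕ} (f : ℝ → ℝ) (A : Matrix (Fin k) (Fin k) ℝ) :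
    entrywise f A = A.map f := rfl

lemma sum_sq_col_le_norm_sq (A : Matrix m n ℝ) (j : n) : ∑ i, A i j ^ 2 ≤ ‖A‖ ^ 2 := by
  have h := Matrix.l2_opNorm_mulVec A (EuclideanSpace.single j 1)
  rw [PiLp.norm_single, norm_one, mul_one] at h
  simpa [EuclideanSpace.real_norm_sq_eq] using pow_le_pow_left₀ (norm_nonneg _) h 2

lemma sum_sq_row_le_norm_sq (A : Matrix m n ℝ) (i : m) : ∑ j, A i j ^ 2 ≤ ‖A‖ ^ 2 := by
  classical
  have h := sum_sq_col_le_norm_sq Aᴴ i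
  rwa [Matrix.l2_opNorm_conjTranspose] at h

lemma abs_apply_le_norm (A : Matrix m n ℝ) (i : m) (j : n) : |A i j| ≤ ‖A‖ :=
  abs_le_of_sq_le_sq ((Finset.single_le_sum (fun i _ => sq_nonneg (A i j))
    (Finset.mem_univ i)).trans (sum_sq_col_le_norm_sq A j)) (norm_nonneg _)

lemma norm_le_sqrt_of_row_col_sum_le {A : Matrix m n ℝ} {r c : ℝ} (hr : 0 ≤ r)
    (hrow : ∀ i, ∑ j, |A i j| ≤ r) (hcol : ∀ j, ∑ i, |A i j| ≤ c) : ‖A‖ ≤ √(r * c) := by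
  refine ContinuousLinearMap.opNorm_le_bound _ (Real.sqrt_nonneg _) fun v => ?_
  rw [← Real.sqrt_sq (norm_nonneg v), ← Real.sqrt_mul' _ (sq_nonneg _)]
  refine Real.le_sqrt_of_sq_le ?_
  rw [EuclideanSpace.real_norm_sq_eq, EuclideanSpace.real_norm_sq_eq]
  calc ∑ i, (A *ᵥ v) i ^ 2
      ≤ ∑ i, r * ∑ j, |A i j| * v j ^ 2 := by
        refine Finset.sum_le_sum fun i _ => (sq_mulVec_le_sum_abs_mul A v i).trans ?_
        gcongr
        exact hrow i
    _ = r * ∑ j, (∑ i, |A i j|) * v j ^ 2 := by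
        rw [← Finset.mul_sum, Finset.sum_comm]
        simp_rw [Finset.sum_mul]
    _ ≤ r * ∑ j, c * v j ^ 2 := by
        gcongr with j
        exact hcol j
    _ = r * c * ∑ j, v j ^ 2 := by rw [← Finset.mul_sum, mul_assoc]

lemma norm_le_of_abs_apply_le_mul_sq {R D : Matrix m n ℝ} {C : ℝ} (hC : 0 ≤ C)
    (h : ∀ i j, |R i j| ≤ C * D i j ^ 2) : ‖R‖ ≤ C * ‖D‖ ^ 2 := by
  rw [← Real.sqrt_mul_self (show 0 ≤ C * ‖D‖ ^ 2 by positivity)]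
  refine norm_le_sqrt_of_row_col_sum_le (by positivity) (fun i => ?_) fun j => ?_
  · calc ∑ j, |R i j| ≤ C * ∑ j, D i j ^ 2 := by
          rw [Finset.mul_sum]
          exact Finset.sum_le_sum fun j _ => h i j
      _ ≤ C * ‖D‖ ^ 2 := by gcongr; exact sum_sq_row_le_norm_sq D i
  · calc ∑ i, |R i j| ≤ C * ∑ i, D i j ^ 2 := by
          rw [Finset.mul_sum]
          exact Finset.sum_le_sum fun i _ => h i j
      _ ≤ C * ‖D‖ ^ 2 := by gcongr; exact sum_sq_col_le_norm_sq D j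

lemma norm_one_le : ‖(1 : Matrix n n ℝ)‖ ≤ 1 := by
  rw [← diagonal_one, l2_opNorm_diagonal]
  exact pi_norm_const_le (1 : ℝ) |>.trans_eq norm_one

lemma norm_le_of_norm_sub_one_sub_smul_le {A D : Matrix n n ℝ} {c C : ℝ} (hC : 0 ≤ C)
    (hD : ‖D‖ ≤ 1) (h : ‖A - 1 - c • D‖ ≤ C * ‖D‖ ^ 2) : ‖A‖ ≤ C + |c| + 1 :=
  calc ‖A‖ ≤ ‖A - 1‖ + ‖(1 : Matrix n n ℝ)‖ := norm_le_norm_sub_add _ _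
    _ ≤ C + |c| + 1 := add_le_add ((norm_le_of_norm_sub_smul_le hC hD h).trans
        (mul_le_of_le_one_right (by positivity) hD)) norm_one_le

lemma norm_map_sub_one_sub_smul_le {f : ℝ → ℝ} {c C δ ε : ℝ} {A : Matrix n n ℝ} (hC : 0 ≤ C)
    (hf : ∀ x, |x| ≤ δ → |f x - c * x| ≤ C * x ^ 2) (hA : ‖A - 1‖ ≤ δ) (hε : 0 ≤ ε)
    (hdiag : ∀ i, |f (A i i) - 1 - c * (A i i - 1)| ≤ ε) :
    ‖A.map f - 1 - c • (A - 1)‖ ≤ ε + C * ‖A - 1‖ ^ 2 := by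
  set R := A.map f - 1 - c • (A - 1) with hR
  set d : Matrix n n ℝ := diagonal fun i => R i i
  have hoff : ‖R - d‖ ≤ C * ‖A - 1‖ ^ 2 := by
    refine norm_le_of_abs_apply_le_mul_sq hC fun i j => ?_
    obtain rfl | hij := eq_or_ne i j
    · simpa [d] using by positivity
    · have hsmall := (abs_apply_le_norm (A - 1) i j).trans hA
      simp only [Matrix.sub_apply, one_apply_ne hij, sub_zero] at hsmall ⊢
      simpa [d, hR, hij] using hf _ hsmall
  have hd : ‖d‖ ≤ ε := by
    rw [l2_opNorm_diagonal]
    refine (pi_norm_le_iff_of_nonneg hε).2 fun i => ?_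
    simpa [hR] using hdiag i
  calc ‖R‖ = ‖d + (R - d)‖ := by rw [add_sub_cancel]
    _ ≤ ‖d‖ + ‖R - d‖ := norm_add_le _ _
    _ ≤ ε + C * ‖A - 1‖ ^ 2 := add_le_add hd hoff

end OperatorNorm

section SquareRoot

lemma abs_sub_one_le_abs_sq_sub_one {x : ℝ} (hx : 0 ≤ x) : |x - 1| ≤ |x * x - 1| := by
  rw [show x * x - 1 = (x - 1) * (x + 1) by ring, abs_mul]
  exact le_mul_of_one_le_right (abs_nonneg _) (le_abs.2 (Or.inl (by linarith)))

section CStarAlgebra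

variable {A : Type*} [NormedRing A] [StarRing A] [NormedAlgebra ℝ A]
  [IsometricContinuousFunctionalCalculus ℝ A IsSelfAdjoint] [PartialOrder A] [StarOrderedRing A]
  [NonnegSpectrumClass ℝ A]

lemma norm_sub_one_le_norm_mul_self_sub_one {a : A} (ha : 0 ≤ a) : ‖a - 1‖ ≤ ‖a * a - 1‖ := by
  have hsa : IsSelfAdjoint a := .of_nonneg ha
  have hsub : cfc (fun x : ℝ => x - 1) a = a - 1 := by
    rw [cfc_sub .., cfc_id' ℝ a, cfc_const_one ℝ a]
  have hsq : cfc (fun x : ℝ => x * x - 1) a = a * a - 1 := by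
    rw [cfc_sub .., cfc_mul .., cfc_id' ℝ a, cfc_const_one ℝ a]
  rw [← hsub, ← hsq]
  refine norm_cfc_le (norm_nonneg _) fun x hx => ?_
  exact (abs_sub_one_le_abs_sq_sub_one (spectrum_nonneg_of_nonneg ha hx)).trans
    (norm_apply_le_norm_cfc (fun x : ℝ => x * x - 1) a hx)

lemma norm_sub_one_sub_half_smul_le {a : A} (ha : 0 ≤ a) :
    ‖a - 1 - (1 / 2 : ℝ) • (a * a - 1)‖ ≤ 1 / 2 * ‖a * a - 1‖ ^ 2 := by
  have hid : a - 1 - (1 / 2 : ℝ) • (a * a - 1) = -((1 / 2 : ℝ) • ((a - 1) * (a - 1))) := by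
    rw [show (a - 1) * (a - 1) = (a * a - 1) - (2 : ℝ) • (a - 1) by rw [two_smul]; noncomm_ring]
    module
  rw [hid, norm_neg, norm_smul, Real.norm_of_nonneg (by norm_num), sq]
  gcongr
  exact (norm_mul_le _ _).trans (by gcongr <;> exact norm_sub_one_le_norm_mul_self_sub_one ha)

lemma norm_sub_one_sub_half_smul_le_of_mul_self {a d : A} {c C : ℝ} (ha : 0 ≤ a) (hC : 0 ≤ C)
    (hd : ‖d‖ ≤ 1) (h : ‖a * a - 1 - c • d‖ ≤ C * ‖d‖ ^ 2) :
    ‖a - 1 - (c / 2) • d‖ ≤ (C + (C + |c|) ^ 2) / 2 * ‖d‖ ^ 2 := by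
  have hsq : ‖a * a - 1‖ ≤ (C + |c|) * ‖d‖ := norm_le_of_norm_sub_smul_le hC hd h
  have hsplit : a - 1 - (c / 2) • d =
      (a - 1 - (1 / 2 : ℝ) • (a * a - 1)) + (1 / 2 : ℝ) • (a * a - 1 - c • d) := by module
  calc ‖a - 1 - (c / 2) • d‖
      ≤ 1 / 2 * ‖a * a - 1‖ ^ 2 + 1 / 2 * ‖a * a - 1 - c • d‖ := by
        rw [hsplit]
        refine (norm_add_le _ _).trans (add_le_add (norm_sub_one_sub_half_smul_le ha) ?_)
        rw [norm_smul, Real.norm_of_nonneg (by norm_num)]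
    _ ≤ 1 / 2 * ((C + |c|) * ‖d‖) ^ 2 + 1 / 2 * (C * ‖d‖ ^ 2) := by gcongr
    _ = (C + (C + |c|) ^ 2) / 2 * ‖d‖ ^ 2 := by ring

end CStarAlgebra

end SquareRoot

section MatrixSquareRoot

open scoped Matrix.Norms.L2Operator MatrixOrder

lemma apply_mem_Icc_of_mul_self_apply_self_eq_one {n : Type*} [Fintype n] {P : Matrix n n ℝ}
    (hP : P.IsSymm) {i : n} (hdiag : (P * P) i i = 1) (j : n) : P i j ∈ Set.Icc (-1 : ℝ) 1 := by
  have hrow : ∑ j, P i j ^ 2 = 1 := by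
    rw [← hdiag, Matrix.mul_apply]
    exact Finset.sum_congr rfl fun j _ => by rw [hP.apply, sq]
  exact abs_le.1 ((sq_le_one_iff_abs_le_one _).1 ((Finset.single_le_sum
    (fun j _ => sq_nonneg (P i j)) (Finset.mem_univ j)).trans_eq hrow))

variable {n : Type*} [Fintype n] [DecidableEq n]

lemma norm_map_sqrt_sub_one_sub_half_smul_le {f : ℝ → ℝ} {c C δ η ε : ℝ} {P : Matrix n n ℝ}
    (hP : P.PosSemidef) (hdiag : ∀ i, (P * P) i i = 1) (hC : 0 ≤ C) (hε : 0 ≤ ε)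
    (hzero : ∀ x, |x| ≤ δ → |f x - c * x| ≤ C * x ^ 2)
    (hone : ∀ x, |x - 1| ≤ η → x ≤ 1 → |f x - 1 - c * (x - 1)| ≤ ε)
    (hδ : ‖P * P - 1‖ ≤ δ) (hη : ‖P * P - 1‖ ≤ η) :
    ‖P.map f - 1 - (c / 2) • (P * P - 1)‖ ≤ ε + (C + |c| / 2) * ‖P * P - 1‖ ^ 2 := by
  have hP1 : ‖P - 1‖ ≤ ‖P * P - 1‖ := norm_sub_one_le_norm_mul_self_sub_one hP.nonneg
  have hmap : ‖P.map f - 1 - c • (P - 1)‖ ≤ ε + C * ‖P - 1‖ ^ 2 := by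
    refine norm_map_sub_one_sub_smul_le hC hzero (hP1.trans hδ) hε fun i => ?_
    have hclose := (abs_apply_le_norm (P - 1) i i).trans (hP1.trans hη)
    rw [Matrix.sub_apply, one_apply_eq] at hclose
    exact hone _ hclose (apply_mem_Icc_of_mul_self_apply_self_eq_one
      (isHermitian_iff_isSymm.1 hP.isHermitian) (hdiag i) i).2
  have hsplit : P.map f - 1 - (c / 2) • (P * P - 1) =
      (P.map f - 1 - c • (P - 1)) + c • (P - 1 - (1 / 2 : ℝ) • (P * P - 1)) := by module
  calc ‖P.map f - 1 - (c / 2) • (P * P - 1)‖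
      ≤ (ε + C * ‖P - 1‖ ^ 2) + |c| * (1 / 2 * ‖P * P - 1‖ ^ 2) := by
        rw [hsplit]
        refine (norm_add_le _ _).trans (add_le_add hmap ((norm_smul_le _ _).trans ?_))
        rw [Real.norm_eq_abs]
        gcongr
        exact norm_sub_one_sub_half_smul_le hP.nonneg
    _ ≤ (ε + C * ‖P * P - 1‖ ^ 2) + |c| * (1 / 2 * ‖P * P - 1‖ ^ 2) := by gcongr
    _ = ε + (C + |c| / 2) * ‖P * P - 1‖ ^ 2 := by ring

end MatrixSquareRoot

section TaylorAtZero

lemma exists_abs_sub_sub_mul_le_of_hasDerivAt {f f' : ℝ → ℝ} {f'' : ℝ}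
    (hf : ∀ᶠ x in 𝓝 0, HasDerivAt f (f' x) x) (hf' : HasDerivAt f' f'' 0) :
    ∃ C ≥ 0, ∃ δ > 0, ∀ x, |x| ≤ δ → |f x - f 0 - f' 0 * x| ≤ C * x ^ 2 := by
  obtain ⟨M, hM⟩ := hf'.differentiableAt.isBigO_sub.bound
  obtain ⟨ε, hε, hball⟩ := Metric.eventually_nhds_iff.1 (hf.and hM)
  refine ⟨|M|, abs_nonneg M, ε / 2, half_pos hε, fun x hx => ?_⟩
  have hnear : ∀ y ∈ Set.uIcc 0 x, dist y 0 < ε ∧ |y| ≤ |x| := fun y hy => by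
    have hyx : |y| ≤ |x| := by simpa using Set.abs_sub_left_of_mem_uIcc hy
    rw [Real.dist_0_eq_abs]
    exact ⟨by linarith, hyx⟩
  have hderiv : ∀ y ∈ Set.uIcc 0 x,
      HasDerivWithinAt (fun y => f y - f' 0 * y) (f' y - f' 0) (Set.uIcc 0 x) y := fun y hy => by
    simpa using ((hball (hnear y hy).1).1.fun_sub
      ((hasDerivAt_id y).const_mul (f' 0))).hasDerivWithinAt
  have hbound : ∀ y ∈ Set.uIcc 0 x, ‖f' y - f' 0‖ ≤ |M| * |x| := fun y hy =>
    calc ‖f' y - f' 0‖ ≤ M * ‖y - 0‖ := (hball (hnear y hy).1).2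
      _ ≤ |M| * |x| := by
        rw [sub_zero, Real.norm_eq_abs]
        exact mul_le_mul (le_abs_self M) (hnear y hy).2 (abs_nonneg y) (abs_nonneg M)
  have hmvt := (convex_uIcc 0 x).norm_image_sub_le_of_norm_hasDerivWithin_le hderiv hbound
    Set.left_mem_uIcc Set.right_mem_uIcc
  calc |f x - f 0 - f' 0 * x| = ‖(f x - f' 0 * x) - (f 0 - f' 0 * 0)‖ := by
        rw [Real.norm_eq_abs]
        ring_nf
    _ ≤ |M| * |x| * ‖x - 0‖ := hmvt
    _ = |M| * x ^ 2 := by rw [sub_zero, Real.norm_eq_abs, mul_assoc, ← sq, sq_abs]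

end TaylorAtZero

section GaussianPairs

lemma variance_continuousLinearMap_prod (μ : Measure (ℝ × ℝ)) [IsGaussian μ]
    (L : ℝ × ℝ →L[ℝ] ℝ) :
    Var[L; μ] = L (1, 0) ^ 2 * Var[Prod.fst; μ]
      + 2 * (L (1, 0) * (L (0, 1) * cov[Prod.fst, Prod.snd; μ]))
      + L (0, 1) ^ 2 * Var[Prod.snd; μ] := by
  have hfst : MemLp (Prod.fst : ℝ × ℝ → ℝ) 2 μ :=
    IsGaussian.memLp_dual μ (.fst ℝ ℝ ℝ) 2 (by simp)
  have hsnd : MemLp (Prod.snd : ℝ × ℝ → ℝ) 2 μ :=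
    IsGaussian.memLp_dual μ (.snd ℝ ℝ ℝ) 2 (by simp)
  have hL : ⇑L = fun p => L (1, 0) * p.1 + L (0, 1) * p.2 := by
    ext p
    conv_lhs => rw [show p = p.1 • ((1 : ℝ), (0 : ℝ)) + p.2 • ((0 : ℝ), (1 : ℝ)) by simp]
    rw [map_add, map_smul, map_smul, smul_eq_mul, smul_eq_mul, mul_comm, mul_comm p.2]
  conv_lhs => rw [hL]
  rw [variance_fun_add (hfst.const_mul _) (hsnd.const_mul _), variance_const_mul,
    variance_const_mul, covariance_const_mul_left, covariance_const_mul_right]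

lemma isGaussian_prod_ext {μ ν : Measure (ℝ × ℝ)} [IsGaussian μ] [IsGaussian ν]
    (hmean : ∫ p, p ∂μ = ∫ p, p ∂ν)
    (hfst : Var[Prod.fst; μ] = Var[Prod.fst; ν]) (hsnd : Var[Prod.snd; μ] = Var[Prod.snd; ν])
    (hcov : cov[Prod.fst, Prod.snd; μ] = cov[Prod.fst, Prod.snd; ν]) : μ = ν := by
  refine Measure.ext_of_charFunDual ?_
  ext L
  rw [IsGaussian.charFunDual_eq, IsGaussian.charFunDual_eq, variance_continuousLinearMap_prod μ,
    variance_continuousLinearMap_prod ν, hfst, hsnd, hcov, integral_complex_ofReal,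
    integral_complex_ofReal, L.integral_comp_id_comm IsGaussian.integrable_id,
    L.integral_comp_id_comm IsGaussian.integrable_id, hmean]

/-- The linear map `(x, z) ↦ (x, ρ x + √(1 - ρ²) z)` sending a pair of independent standard normal
variables to a pair of standard normal variables with correlation `ρ ∈ [-1, 1]`. -/
def correlationMap (ρ : ℝ) : ℝ × ℝ →L[ℝ] ℝ × ℝ :=
  (ContinuousLinearMap.fst ℝ ℝ ℝ).prod
    (ρ • ContinuousLinearMap.fst ℝ ℝ ℝ + √(1 - ρ ^ 2) • ContinuousLinearMap.snd ℝ ℝ ℝ)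

lemma correlationMap_apply (ρ : ℝ) (p : ℝ × ℝ) :
    correlationMap ρ p = (p.1, ρ * p.1 + √(1 - ρ ^ 2) * p.2) := rfl

/-- The law of a pair of standard normal variables with correlation `ρ`. It has this meaning only
for `ρ ∈ [-1, 1]`. -/
def bivariateGaussian (ρ : ℝ) : Measure (ℝ × ℝ) :=
  ((gaussianReal 0 1).prod (gaussianReal 0 1)).map (correlationMap ρ)

instance isGaussian_bivariateGaussian (ρ : ℝ) : IsGaussian (bivariateGaussian ρ) :=
  isGaussian_map _

lemma integral_id_map_eq_zero {E F : Type*} [NormedAddCommGroup E] [NormedSpace ℝ E]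
    [CompleteSpace E] [SecondCountableTopology E] [MeasurableSpace E] [BorelSpace E]
    [NormedAddCommGroup F] [NormedSpace ℝ F] [CompleteSpace F] [SecondCountableTopology F]
    [MeasurableSpace F] [BorelSpace F] {μ : Measure E} [IsGaussian μ] (hμ : ∫ x, x ∂μ = 0)
    (L : E →L[ℝ] F) : ∫ y, y ∂μ.map L = 0 := by
  rw [integral_map (by fun_prop) (by fun_prop), L.integral_comp_id_comm IsGaussian.integrable_id,
    hμ, map_zero]

lemma integral_id_bivariateGaussian (ρ : ℝ) : ∫ p, p ∂bivariateGaussian ρ = 0 := by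
  refine integral_id_map_eq_zero ?_ _
  refine Prod.ext ((fst_integral IsGaussian.integrable_id).trans ?_)
    ((snd_integral IsGaussian.integrable_id).trans ?_)
  · simp [integral_fun_fst (fun x : ℝ => x)]
  · simp [integral_fun_snd (fun x : ℝ => x)]

lemma map_fst_bivariateGaussian (ρ : ℝ) :
    (bivariateGaussian ρ).map Prod.fst = gaussianReal 0 1 := by
  rw [bivariateGaussian, Measure.map_map measurable_fst (by fun_prop)]
  exact measurePreserving_fst.map_eq

lemma variance_fst_bivariateGaussian (ρ : ℝ) : Var[Prod.fst; bivariateGaussian ρ] = 1 := by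
  have hmp : MeasurePreserving Prod.fst (bivariateGaussian ρ) (gaussianReal 0 1) :=
    ⟨measurable_fst, map_fst_bivariateGaussian ρ⟩
  rw [hmp.variance_fun_comp (f := fun x => x) (by fun_prop), variance_fun_id_gaussianReal,
    NNReal.coe_one]

lemma variance_snd_bivariateGaussian {ρ : ℝ} (hρ : ρ ∈ Set.Icc (-1 : ℝ) 1) :
    Var[Prod.snd; bivariateGaussian ρ] = 1 := by
  have hid : MemLp (fun x : ℝ => x) 2 (gaussianReal 0 1) := memLp_id_gaussianReal 2
  rw [bivariateGaussian, variance_map measurable_snd.aemeasurable (by fun_prop)]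
  change Var[fun p : ℝ × ℝ => ρ * p.1 + √(1 - ρ ^ 2) * p.2; _] = 1
  rw [variance_add_prod (hid.const_mul ρ) (hid.const_mul _), variance_const_mul,
    variance_const_mul, variance_fun_id_gaussianReal, Real.sq_sqrt (by nlinarith [hρ.1, hρ.2])]
  simp

lemma map_snd_bivariateGaussian {ρ : ℝ} (hρ : ρ ∈ Set.Icc (-1 : ℝ) 1) :
    (bivariateGaussian ρ).map Prod.snd = gaussianReal 0 1 := by
  have h := IsGaussian.map_eq_gaussianReal (μ := bivariateGaussian ρ)
    (ContinuousLinearMap.snd ℝ ℝ ℝ)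
  rw [(ContinuousLinearMap.snd ℝ ℝ ℝ).integral_comp_id_comm IsGaussian.integrable_id,
    integral_id_bivariateGaussian] at h
  simpa [variance_snd_bivariateGaussian hρ] using h

lemma covariance_bivariateGaussian (ρ : ℝ) :
    cov[Prod.fst, Prod.snd; bivariateGaussian ρ] = ρ := by
  have hid : MemLp (fun x : ℝ => x) 2 (gaussianReal 0 1) := memLp_id_gaussianReal 2
  rw [bivariateGaussian, covariance_map (by fun_prop) (by fun_prop) (by fun_prop)]
  change cov[fun p : ℝ × ℝ => p.1,
    (fun p : ℝ × ℝ => ρ * p.1) + fun p => √(1 - ρ ^ 2) * p.2; _] = ρ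
  rw [covariance_add_right (hid.comp_fst _) ((hid.const_mul ρ).comp_fst _)
    ((hid.const_mul _).comp_snd _), covariance_const_mul_right, covariance_const_mul_right,
    covariance_fst_snd_prod hid hid, covariance_self (by fun_prop),
    measurePreserving_fst.variance_fun_comp (f := fun x => x) (by fun_prop),
    variance_fun_id_gaussianReal]
  simp

lemma eq_bivariateGaussian {μ : Measure (ℝ × ℝ)} [IsGaussian μ] {ρ : ℝ}
    (hρ : ρ ∈ Set.Icc (-1 : ℝ) 1) (hmean : ∫ p, p ∂μ = 0) (hfst : Var[Prod.fst; μ] = 1)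
    (hsnd : Var[Prod.snd; μ] = 1) (hcov : cov[Prod.fst, Prod.snd; μ] = ρ) :
    μ = bivariateGaussian ρ :=
  isGaussian_prod_ext (hmean.trans (integral_id_bivariateGaussian ρ).symm)
    (hfst.trans (variance_fst_bivariateGaussian ρ).symm)
    (hsnd.trans (variance_snd_bivariateGaussian hρ).symm)
    (hcov.trans (covariance_bivariateGaussian ρ).symm)

lemma map_multivariateGaussian_eq_bivariateGaussian {ι : Type*} [Fintype ι] [DecidableEq ι]
    {S : Matrix ι ι ℝ} (hS : S.PosSemidef) {i j : ι} (hi : S i i = 1) (hj : S j j = 1)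
    (hij : S i j ∈ Set.Icc (-1 : ℝ) 1) :
    (multivariateGaussian 0 S).map (fun x => (x i, x j)) = bivariateGaussian (S i j) := by
  set L : EuclideanSpace ℝ ι →L[ℝ] ℝ × ℝ := (EuclideanSpace.proj i).prod (EuclideanSpace.proj j)
  change (multivariateGaussian 0 S).map L = _
  refine eq_bivariateGaussian hij
    (integral_id_map_eq_zero integral_id_multivariateGaussian L) ?_ ?_ ?_
  · rw [variance_map (by fun_prop) (by fun_prop), ← hi]
    exact variance_eval_multivariateGaussian hS i
  · rw [variance_map (by fun_prop) (by fun_prop), ← hj]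
    exact variance_eval_multivariateGaussian hS j
  · rw [covariance_map (by fun_prop) (by fun_prop) (by fun_prop)]
    exact covariance_eval_multivariateGaussian hS i j

end GaussianPairs

section StandardNormalCDF

lemma gaussianPDFReal_zero_one (x : ℝ) :
    gaussianPDFReal 0 1 x = (√(2 * π))⁻¹ * Real.exp (-x ^ 2 / 2) := by
  simp [gaussianPDFReal]

lemma continuous_gaussianPDFReal (μ : ℝ) (v : ℝ≥0) : Continuous (gaussianPDFReal μ v) := by
  unfold gaussianPDFReal
  fun_prop

lemma gaussianPDFReal_zero_one_le_one (x : ℝ) : gaussianPDFReal 0 1 x ≤ 1 := by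
  rw [gaussianPDFReal_zero_one]
  refine mul_le_one₀ (inv_le_one_of_one_le₀ ?_) (by positivity) ?_
  · rw [Real.one_le_sqrt]
    linarith [Real.pi_gt_three]
  · rw [Real.exp_le_one_iff]
    nlinarith [sq_nonneg x]

lemma setIntegral_gaussianReal {μ : ℝ} {v : ℝ≥0} (hv : v ≠ 0) (f : ℝ → ℝ) {s : Set ℝ}
    (hs : MeasurableSet s) :
    ∫ x in s, f x ∂gaussianReal μ v = ∫ x in s, gaussianPDFReal μ v x * f x := by
  rw [gaussianReal_of_var_ne_zero μ hv, setIntegral_withDensity_eq_setIntegral_toReal_smul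
    (by fun_prop) (ae_of_all _ fun _ => gaussianPDF_lt_top) f hs]
  simp only [toReal_gaussianPDF, smul_eq_mul]

lemma integrable_gaussianReal_iff {μ : ℝ} {v : ℝ≥0} (hv : v ≠ 0) {f : ℝ → ℝ} :
    Integrable f (gaussianReal μ v) ↔ Integrable fun x => gaussianPDFReal μ v x * f x := by
  rw [gaussianReal_of_var_ne_zero μ hv, integrable_withDensity_iff_integrable_smul'
    (by fun_prop) (ae_of_all _ fun _ => gaussianPDF_lt_top)]
  simp only [toReal_gaussianPDF, smul_eq_mul]

lemma hasDerivAt_integral_Iic {f : ℝ → ℝ} (hf : Integrable f) (hfc : Continuous f) (x : ℝ) :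
    HasDerivAt (fun x => ∫ y in Set.Iic x, f y) (f x) x := by
  have hsplit : (fun x => ∫ y in Set.Iic x, f y) =
      fun x => (∫ y in Set.Iic 0, f y) + ∫ y in (0 : ℝ)..x, f y := by
    ext x
    rw [← intervalIntegral.integral_Iic_sub_Iic hf.integrableOn hf.integrableOn, add_sub_cancel]
  rw [hsplit]
  exact (hfc.integral_hasStrictDerivAt 0 x).hasDerivAt.const_add _

lemma stdGaussianCDF_eq_measureReal (x : ℝ) :
    stdGaussianCDF x = (gaussianReal 0 1).real (Set.Iic x) := rfl

lemma monotone_stdGaussianCDF : Monotone stdGaussianCDF := fun _ _ h =>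
  measureReal_mono (μ := gaussianReal 0 1) (Set.Iic_subset_Iic.2 h)

lemma hasDerivAt_stdGaussianCDF (x : ℝ) :
    HasDerivAt stdGaussianCDF (gaussianPDFReal 0 1 x) x := by
  have hcdf : stdGaussianCDF = fun x => ∫ y in Set.Iic x, gaussianPDFReal 0 1 y := by
    ext x
    rw [stdGaussianCDF, gaussianReal_apply_eq_integral 0 one_ne_zero,
      ENNReal.toReal_ofReal (integral_nonneg fun y => gaussianPDFReal_nonneg 0 1 y)]
  rw [hcdf]
  exact hasDerivAt_integral_Iic (integrable_gaussianPDFReal 0 1) (continuous_gaussianPDFReal 0 1) x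

lemma continuous_stdGaussianCDF : Continuous stdGaussianCDF :=
  continuous_iff_continuousAt.2 fun x => (hasDerivAt_stdGaussianCDF x).continuousAt

end StandardNormalCDF

section BivariateCDF

/-- The joint distribution function `P(X ≤ a, Y ≤ b)` of a pair `(X, Y)` of standard normal
variables with correlation `ρ`. -/
def bivariateGaussianCDF (a b ρ : ℝ) : ℝ :=
  (bivariateGaussian ρ).real (Set.Iic a ×ˢ Set.Iic b)

lemma bivariateGaussianCDF_eq_measureReal_preimage (a b ρ : ℝ) :
    bivariateGaussianCDF a b ρ = ((gaussianReal 0 1).prod (gaussianReal 0 1)).real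
      (correlationMap ρ ⁻¹' (Set.Iic a ×ˢ Set.Iic b)) :=
  map_measureReal_apply (by fun_prop) (measurableSet_Iic.prod measurableSet_Iic)

lemma bivariateGaussianCDF_zero (a b : ℝ) :
    bivariateGaussianCDF a b 0 = stdGaussianCDF a * stdGaussianCDF b := by
  have hpre : correlationMap 0 ⁻¹' (Set.Iic a ×ˢ Set.Iic b) = Set.Iic a ×ˢ Set.Iic b := by
    ext p
    simp [correlationMap_apply]
  rw [bivariateGaussianCDF_eq_measureReal_preimage, hpre, measureReal_prod_prod]
  rfl

lemma bivariateGaussianCDF_one (a b : ℝ) :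
    bivariateGaussianCDF a b 1 = min (stdGaussianCDF a) (stdGaussianCDF b) := by
  have hpre : correlationMap 1 ⁻¹' (Set.Iic a ×ˢ Set.Iic b) = Set.Iic (min a b) ×ˢ Set.univ := by
    ext p
    simp [correlationMap_apply]
  rw [bivariateGaussianCDF_eq_measureReal_preimage, hpre, measureReal_prod_prod, probReal_univ,
    mul_one, ← monotone_stdGaussianCDF.map_min, stdGaussianCDF_eq_measureReal]

/-- As `r → ρ` the preimages of the quadrant converge off the event that the second coordinate
equals `b`, which is null because that coordinate is standard normal, even at `ρ = ±1`. -/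
lemma continuousAt_bivariateGaussianCDF (a b : ℝ) {ρ : ℝ} (hρ : ρ ∈ Set.Icc (-1 : ℝ) 1) :
    ContinuousAt (bivariateGaussianCDF a b) ρ := by
  have hmeas (r : ℝ) : MeasurableSet (correlationMap r ⁻¹' (Set.Iic a ×ˢ Set.Iic b)) :=
    (measurableSet_Iic.prod measurableSet_Iic).preimage (by fun_prop)
  have hne : ∀ᵐ p ∂(gaussianReal 0 1).prod (gaussianReal 0 1), (correlationMap ρ p).2 ≠ b := by
    have := nullSingletonClass_gaussianReal (μ := 0) (v := 1) one_ne_zero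
    have hsnd : ∀ᵐ p ∂bivariateGaussian ρ, p.2 ≠ b := by
      refine ae_of_ae_map (p := (· ≠ b)) measurable_snd.aemeasurable ?_
      rw [map_snd_bivariateGaussian hρ]
      exact Measure.ae_ne _ b
    exact ae_of_ae_map (p := fun p => p.2 ≠ b) (f := correlationMap ρ) (by fun_prop) hsnd
  have hlim : Tendsto (fun r => ((gaussianReal 0 1).prod (gaussianReal 0 1))
      (correlationMap r ⁻¹' (Set.Iic a ×ˢ Set.Iic b))) (𝓝 ρ)
      (𝓝 (((gaussianReal 0 1).prod (gaussianReal 0 1))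
        (correlationMap ρ ⁻¹' (Set.Iic a ×ˢ Set.Iic b)))) := by
    refine tendsto_measure_of_ae_tendsto_indicator_of_isFiniteMeasure _ (hmeas ρ) hmeas ?_
    filter_upwards [hne] with p hp
    have hcont : ContinuousAt (fun r => (correlationMap r p).2) ρ := by
      simp only [correlationMap_apply]
      fun_prop
    rcases hp.lt_or_gt with h | h
    · filter_upwards [hcont.eventually_lt_const h] with r hr
      exact and_congr_right fun _ => iff_of_true hr.le h.le
    · filter_upwards [hcont.eventually_const_lt h] with r hr
      exact and_congr_right fun _ => iff_of_false hr.not_ge h.not_ge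
  rw [funext (bivariateGaussianCDF_eq_measureReal_preimage a b)]
  exact (ENNReal.tendsto_toReal (measure_ne_top _ _)).comp hlim

lemma measureReal_prod {α β : Type*} {_ : MeasurableSpace α} {_ : MeasurableSpace β}
    {μ : Measure α} {ν : Measure β} [IsFiniteMeasure ν] {s : Set (α × β)} (hs : MeasurableSet s) :
    (μ.prod ν).real s = ∫ x, ν.real (Prod.mk x ⁻¹' s) ∂μ := by
  rw [measureReal_def, Measure.prod_apply hs]
  exact (integral_toReal (measurable_measure_prodMk_left hs).aemeasurable
    (ae_of_all _ fun _ => measure_lt_top _ _)).symm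

lemma bivariateGaussianCDF_eq_setIntegral (a b : ℝ) {ρ : ℝ} (hρ : ρ ^ 2 < 1) :
    bivariateGaussianCDF a b ρ =
      ∫ x in Set.Iic a, stdGaussianCDF ((b - ρ * x) / √(1 - ρ ^ 2)) ∂gaussianReal 0 1 := by
  have hmeas : MeasurableSet (correlationMap ρ ⁻¹' (Set.Iic a ×ˢ Set.Iic b)) :=
    (measurableSet_Iic.prod measurableSet_Iic).preimage (by fun_prop)
  have hs : 0 < √(1 - ρ ^ 2) := Real.sqrt_pos.2 (by linarith)
  rw [bivariateGaussianCDF_eq_measureReal_preimage, measureReal_prod hmeas,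
    ← integral_indicator measurableSet_Iic]
  congr 1
  ext x
  by_cases hx : x ∈ Set.Iic a
  · rw [Set.indicator_of_mem hx, stdGaussianCDF_eq_measureReal]
    congr 1
    ext z
    simp [correlationMap_apply, Set.mem_Iic.1 hx, le_div_iff₀ hs, le_sub_iff_add_le', mul_comm]
  · rw [Set.indicator_of_notMem hx]
    have hempty : Prod.mk x ⁻¹' (correlationMap ρ ⁻¹' (Set.Iic a ×ˢ Set.Iic b)) = ∅ :=
      Set.eq_empty_of_forall_notMem fun z hz => hx hz.1
    rw [hempty, measureReal_empty]

end BivariateCDF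

section Plackett

/-- The joint density at `(a, b)` of two standard normal variables with correlation `r`; with
`a = q_i` and `b = q_j` it is the integrand in the definition of `r_{i,j}`. -/
def bivariateGaussianDensity (a b r : ℝ) : ℝ :=
  (2 * π * √(1 - r ^ 2))⁻¹ *
    Real.exp (-((a ^ 2 + b ^ 2 - 2 * r * a * b) / (2 * (1 - r ^ 2))))

lemma bivariateGaussianDensity_nonneg (a b r : ℝ) : 0 ≤ bivariateGaussianDensity a b r := by
  unfold bivariateGaussianDensity
  positivity

lemma bivariateGaussianDensity_comm (a b r : ℝ) :
    bivariateGaussianDensity a b r = bivariateGaussianDensity b a r := by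
  unfold bivariateGaussianDensity
  ring_nf

lemma gaussianPDFReal_mul_conditional (a b : ℝ) {r : ℝ} (hr : r ^ 2 < 1) :
    gaussianPDFReal 0 1 a * gaussianPDFReal 0 1 ((b - r * a) / √(1 - r ^ 2)) =
      √(1 - r ^ 2) * bivariateGaussianDensity a b r := by
  have hr' : 0 < 1 - r ^ 2 := by linarith
  have hs : √(1 - r ^ 2) ≠ 0 := (Real.sqrt_pos.2 hr').ne'
  have hexp : Real.exp (-a ^ 2 / 2) * Real.exp (-((b - r * a) / √(1 - r ^ 2)) ^ 2 / 2) =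
      Real.exp (-((a ^ 2 + b ^ 2 - 2 * r * a * b) / (2 * (1 - r ^ 2)))) := by
    rw [← Real.exp_add, div_pow, Real.sq_sqrt hr'.le]
    congr 1
    field_simp
    ring
  rw [bivariateGaussianDensity, ← hexp, gaussianPDFReal_zero_one, gaussianPDFReal_zero_one,
    mul_mul_mul_comm, ← mul_inv, Real.mul_self_sqrt (by positivity)]
  field_simp

lemma hasDerivAt_bivariateGaussianDensity_fst (b : ℝ) {r : ℝ} (hr : r ^ 2 < 1) (x : ℝ) :
    HasDerivAt (fun x => bivariateGaussianDensity x b r)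
      ((b * r - x) / (1 - r ^ 2) * bivariateGaussianDensity x b r) x := by
  have hr' : 1 - r ^ 2 ≠ 0 := by linarith
  have hquad : HasDerivAt (fun x : ℝ => x ^ 2 + b ^ 2 - 2 * r * x * b)
      (2 * x - 2 * r * b) x := by
    simpa using ((hasDerivAt_pow 2 x).add_const (b ^ 2)).fun_sub
      (((hasDerivAt_id x).const_mul (2 * r)).mul_const b)
  refine ((hquad.div_const (2 * (1 - r ^ 2))).fun_neg.exp.const_mul _).congr_deriv ?_
  rw [bivariateGaussianDensity]
  field_simp
  ring

lemma differentiableAt_bivariateGaussianDensity (a b : ℝ) :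
    DifferentiableAt ℝ (bivariateGaussianDensity a b) 0 := by
  have hsqrt : DifferentiableAt ℝ (fun r : ℝ => √(1 - r ^ 2)) 0 :=
    DifferentiableAt.sqrt (by fun_prop) (by norm_num)
  refine ((hsqrt.const_mul _).inv (by simp [Real.pi_ne_zero])).mul (DifferentiableAt.exp ?_)
  exact (DifferentiableAt.div (by fun_prop) (by fun_prop) (by norm_num)).neg

lemma hasDerivAt_sub_mul_div_sqrt (b x : ℝ) {r : ℝ} (hr : r ^ 2 < 1) :
    HasDerivAt (fun r : ℝ => (b - r * x) / √(1 - r ^ 2)) ((b * r - x) / √(1 - r ^ 2) ^ 3) r := by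
  have hr' : 0 < 1 - r ^ 2 := by linarith
  have hs : √(1 - r ^ 2) ≠ 0 := (Real.sqrt_pos.2 hr').ne'
  have hden : HasDerivAt (fun r : ℝ => √(1 - r ^ 2)) (-(2 * r) / (2 * √(1 - r ^ 2))) r := by
    simpa using ((hasDerivAt_pow 2 r).const_sub 1).sqrt hr'.ne'
  have hnum : HasDerivAt (fun r : ℝ => b - r * x) (-x) r := by
    simpa using ((hasDerivAt_id r).mul_const x).const_sub b
  refine (hnum.fun_div hden hs).congr_deriv ?_
  field_simp
  rw [Real.sq_sqrt hr'.le]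
  ring

/-- The `r`-derivative of the conditional distribution function
`P(Y ≤ b | X = x) = Φ((b - r x) / √(1 - r²))` of a pair `(X, Y)` of standard normal variables with
correlation `r`. -/
def conditionalCDFDeriv (b r x : ℝ) : ℝ :=
  gaussianPDFReal 0 1 ((b - r * x) / √(1 - r ^ 2)) * ((b * r - x) / √(1 - r ^ 2) ^ 3)

lemma measurable_conditionalCDFDeriv (b r : ℝ) : Measurable (conditionalCDFDeriv b r) := by
  unfold conditionalCDFDeriv
  have := measurable_gaussianPDFReal 0 1
  fun_prop

lemma hasDerivAt_conditionalCDF (b x : ℝ) {r : ℝ} (hr : r ^ 2 < 1) :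
    HasDerivAt (fun r => stdGaussianCDF ((b - r * x) / √(1 - r ^ 2)))
      (conditionalCDFDeriv b r x) r :=
  (hasDerivAt_stdGaussianCDF _).comp r (hasDerivAt_sub_mul_div_sqrt b x hr)

lemma abs_conditionalCDFDeriv_le (b x : ℝ) {r r' : ℝ} (hr : |r| ≤ r') (hr' : r' < 1) :
    |conditionalCDFDeriv b r x| ≤ (|b| + |x|) / √(1 - r' ^ 2) ^ 3 := by
  have hr'0 : 0 ≤ r' := (abs_nonneg r).trans hr
  have hs : 0 < √(1 - r' ^ 2) := Real.sqrt_pos.2 (by nlinarith)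
  have hs' : √(1 - r' ^ 2) ≤ √(1 - r ^ 2) :=
    Real.sqrt_le_sqrt (sub_le_sub_left (sq_le_sq' (neg_le_of_abs_le hr) (le_of_abs_le hr)) 1)
  have hnum : |b * r - x| ≤ |b| + |x| := by
    refine (abs_sub _ _).trans (add_le_add_left ?_ _)
    rw [abs_mul]
    exact mul_le_of_le_one_right (abs_nonneg b) (hr.trans hr'.le)
  rw [conditionalCDFDeriv, abs_mul, abs_of_nonneg (gaussianPDFReal_nonneg _ _ _), abs_div,
    abs_of_nonneg (pow_nonneg (Real.sqrt_nonneg _) 3)]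
  refine (mul_le_of_le_one_left (by positivity) (gaussianPDFReal_zero_one_le_one _)).trans ?_
  gcongr

lemma integrable_conditionalCDFDeriv (b : ℝ) {r : ℝ} (hr : |r| < 1) :
    Integrable (conditionalCDFDeriv b r) (gaussianReal 0 1) := by
  have hid : Integrable (fun x : ℝ => x) (gaussianReal 0 1) :=
    memLp_one_iff_integrable.1 (memLp_id_gaussianReal 1)
  refine (((integrable_const |b|).add hid.abs).div_const (√(1 - |r| ^ 2) ^ 3)).mono'
    (measurable_conditionalCDFDeriv b r).aestronglyMeasurable (ae_of_all _ fun x => ?_)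
  exact abs_conditionalCDFDeriv_le b x le_rfl hr

/-- The mixed-derivative identity `φ(x) ∂_r Φ((b - r x) / √(1 - r²)) = ∂_x p_r(x, b)` behind
Plackett's formula: integrating the right-hand side over `x ≤ a` leaves the density
`p_r(a, b)`. -/
lemma gaussianPDFReal_mul_conditionalCDFDeriv (b x : ℝ) {r : ℝ} (hr : r ^ 2 < 1) :
    gaussianPDFReal 0 1 x * conditionalCDFDeriv b r x =
      (b * r - x) / (1 - r ^ 2) * bivariateGaussianDensity x b r := by
  have hr' : 0 < 1 - r ^ 2 := by linarith
  have hs : √(1 - r ^ 2) ≠ 0 := (Real.sqrt_pos.2 hr').ne'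
  rw [conditionalCDFDeriv, ← mul_assoc, gaussianPDFReal_mul_conditional x b hr]
  nth_rw 3 [← Real.sq_sqrt hr'.le]
  field_simp

lemma integrable_bivariateGaussianDensity_fst (b : ℝ) {r : ℝ} (hr : r ^ 2 < 1) :
    Integrable fun x => bivariateGaussianDensity x b r := by
  have hs : √(1 - r ^ 2) ≠ 0 := (Real.sqrt_pos.2 (by linarith)).ne'
  have := measurable_gaussianPDFReal 0 1
  refine ((((integrable_gaussianPDFReal 0 1).mul_bdd (c := 1)
    (g := fun x => gaussianPDFReal 0 1 ((b - r * x) / √(1 - r ^ 2)))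
    (Measurable.aestronglyMeasurable (by fun_prop)) (ae_of_all _ fun x => ?_))).const_mul
      (√(1 - r ^ 2))⁻¹).congr (ae_of_all _ fun x => ?_)
  · rw [Real.norm_of_nonneg (gaussianPDFReal_nonneg _ _ _)]
    exact gaussianPDFReal_zero_one_le_one _
  · simp only [gaussianPDFReal_mul_conditional x b hr, inv_mul_cancel_left₀ hs]

lemma setIntegral_conditionalCDFDeriv (a b : ℝ) {r : ℝ} (hr : r ^ 2 < 1) :
    ∫ x in Set.Iic a, conditionalCDFDeriv b r x ∂gaussianReal 0 1 =
      bivariateGaussianDensity a b r := by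
  have hint : Integrable fun x => (b * r - x) / (1 - r ^ 2) * bivariateGaussianDensity x b r := by
    simp only [← gaussianPDFReal_mul_conditionalCDFDeriv b _ hr]
    exact (integrable_gaussianReal_iff one_ne_zero).1
      (integrable_conditionalCDFDeriv b (sq_lt_one_iff_abs_lt_one r |>.1 hr))
  have hderiv (x : ℝ) (_ : x ∈ Set.Iic a) := hasDerivAt_bivariateGaussianDensity_fst b hr x
  simp only [setIntegral_gaussianReal one_ne_zero _ measurableSet_Iic,
    gaussianPDFReal_mul_conditionalCDFDeriv b _ hr]
  rw [integral_Iic_of_hasDerivAt_of_tendsto' hderiv hint.integrableOn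
    (tendsto_zero_of_hasDerivAt_of_integrableOn_Iic hderiv hint.integrableOn
      (integrable_bivariateGaussianDensity_fst b hr).integrableOn), sub_zero]

lemma hasDerivAt_setIntegral_conditionalCDF (s : Set ℝ) (b : ℝ) {ρ : ℝ} (hρ : |ρ| < 1) :
    HasDerivAt
      (fun r => ∫ x in s, stdGaussianCDF ((b - r * x) / √(1 - r ^ 2)) ∂gaussianReal 0 1)
      (∫ x in s, conditionalCDFDeriv b ρ x ∂gaussianReal 0 1) ρ := by
  obtain ⟨r', hρr', hr'⟩ := exists_between hρ
  have hmeas (r : ℝ) : AEStronglyMeasurable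
      (fun x => stdGaussianCDF ((b - r * x) / √(1 - r ^ 2))) ((gaussianReal 0 1).restrict s) :=
    (continuous_stdGaussianCDF.comp (by fun_prop)).aestronglyMeasurable
  have hid : Integrable (fun x : ℝ => x) (gaussianReal 0 1) :=
    memLp_one_iff_integrable.1 (memLp_id_gaussianReal 1)
  have hle_one (x : ℝ) : ‖stdGaussianCDF x‖ ≤ 1 := by
    rw [stdGaussianCDF_eq_measureReal, Real.norm_of_nonneg measureReal_nonneg]
    exact measureReal_le_one
  refine (hasDerivAt_integral_of_dominated_loc_of_deriv_le (s := {r | |r| < r'})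
    (F' := fun r x => conditionalCDFDeriv b r x)
    (bound := fun x => (|b| + |x|) / √(1 - r' ^ 2) ^ 3)
    (continuous_abs.continuousAt.eventually_lt_const hρr') (.of_forall hmeas)
    (.of_bound (hmeas ρ) 1 (ae_of_all _ fun x => hle_one _))
    (measurable_conditionalCDFDeriv b ρ).aestronglyMeasurable (ae_of_all _ fun x r hr => ?_)
    (((integrable_const |b|).add hid.abs).div_const _).restrict
    (ae_of_all _ fun x r hr => ?_)).2
  · exact abs_conditionalCDFDeriv_le b x (le_of_lt hr) hr'
  · exact hasDerivAt_conditionalCDF b x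
      (sq_lt_one_iff_abs_lt_one r |>.2 (lt_trans hr hr'))

lemma hasDerivAt_bivariateGaussianCDF (a b : ℝ) {ρ : ℝ} (hρ : |ρ| < 1) :
    HasDerivAt (bivariateGaussianCDF a b) (bivariateGaussianDensity a b ρ) ρ := by
  rw [← setIntegral_conditionalCDFDeriv a b (sq_lt_one_iff_abs_lt_one ρ |>.2 hρ)]
  refine (hasDerivAt_setIntegral_conditionalCDF (Set.Iic a) b hρ).congr_of_eventuallyEq ?_
  filter_upwards [continuous_abs.continuousAt.eventually_lt_const hρ] with r hr
  exact bivariateGaussianCDF_eq_setIntegral a b (sq_lt_one_iff_abs_lt_one r |>.2 hr)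

end Plackett

section CovarianceRepresentation

lemma rfun_eq_bivariateGaussianCDF_sub (q : ℕ → ℝ) (i j : ℕ) {ρ : ℝ}
    (hρ : ρ ∈ Set.Icc (-1 : ℝ) 1) :
    rfun q i j ρ =
      bivariateGaussianCDF (q i) (q j) ρ - stdGaussianCDF (q i) * stdGaussianCDF (q j) := by
  have hsub : Set.uIcc 0 ρ ⊆ Set.Icc (-1 : ℝ) 1 := Set.uIcc_subset_Icc (by simp) hρ
  have hcont : ContinuousOn (bivariateGaussianCDF (q i) (q j)) (Set.uIcc 0 ρ) := fun x hx =>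
    (continuousAt_bivariateGaussianCDF _ _ (hsub hx)).continuousWithinAt
  have hderiv (x : ℝ) (hx : x ∈ Set.Ioo (min 0 ρ) (max 0 ρ)) :
      HasDerivAt (bivariateGaussianCDF (q i) (q j)) (bivariateGaussianDensity (q i) (q j) x) x :=
    hasDerivAt_bivariateGaussianCDF _ _ (abs_lt.2
      ⟨(le_min (by norm_num) hρ.1).trans_lt hx.1, hx.2.trans_le (max_le (by norm_num) hρ.2)⟩)
  rw [← bivariateGaussianCDF_zero]
  exact intervalIntegral.integral_eq_sub_of_hasDeriv_right hcont
    (fun x hx => (hderiv x hx).hasDerivWithinAt)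
    (intervalIntegral.intervalIntegrable_deriv_of_nonneg hcont hderiv
      fun x _ => bivariateGaussianDensity_nonneg _ _ _)

lemma rfun_comm (q : ℕ → ℝ) (i j : ℕ) (ρ : ℝ) : rfun q i j ρ = rfun q j i ρ :=
  intervalIntegral.integral_congr fun _ _ => bivariateGaussianDensity_comm _ _ _

lemma memLp_indicator_one {Ω : Type*} [MeasurableSpace Ω] {μ : Measure Ω} [IsFiniteMeasure μ]
    {s : Set Ω} (hs : MeasurableSet s) (p : ℝ≥0∞) : MemLp (s.indicator (1 : Ω → ℝ)) p μ :=
  (memLp_const 1).indicator hs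

lemma covariance_indicator_one {Ω : Type*} [MeasurableSpace Ω] {μ : Measure Ω}
    [IsProbabilityMeasure μ] {s t : Set Ω} (hs : MeasurableSet s) (ht : MeasurableSet t) :
    cov[s.indicator (1 : Ω → ℝ), t.indicator 1; μ] = μ.real (s ∩ t) - μ.real s * μ.real t := by
  rw [covariance_eq_sub (memLp_indicator_one hs 2) (memLp_indicator_one ht 2),
    ← Set.inter_indicator_one, integral_indicator_one (hs.inter ht), integral_indicator_one hs,
    integral_indicator_one ht]

lemma rfun_eq_covariance (q : ℕ → ℝ) (i j : ℕ) {ρ : ℝ} (hρ : ρ ∈ Set.Icc (-1 : ℝ) 1) :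
    rfun q i j ρ = cov[fun p => (Set.Iic (q i)).indicator 1 p.1,
      fun p => (Set.Iic (q j)).indicator 1 p.2; bivariateGaussian ρ] := by
  have hfst : (bivariateGaussian ρ).real (Prod.fst ⁻¹' Set.Iic (q i)) = stdGaussianCDF (q i) := by
    rw [← map_measureReal_apply measurable_fst measurableSet_Iic, map_fst_bivariateGaussian]
    rfl
  have hsnd : (bivariateGaussian ρ).real (Prod.snd ⁻¹' Set.Iic (q j)) = stdGaussianCDF (q j) := by
    rw [← map_measureReal_apply measurable_snd measurableSet_Iic, map_snd_bivariateGaussian hρ]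
    rfl
  rw [rfun_eq_bivariateGaussianCDF_sub q i j hρ, ← hfst, ← hsnd]
  exact (covariance_indicator_one (measurable_fst measurableSet_Iic)
    (measurable_snd measurableSet_Iic)).symm

lemma posSemidef_covariance {Ω ι : Type*} [MeasurableSpace Ω] [Finite ι] {μ : Measure Ω}
    [IsFiniteMeasure μ] {X : ι → Ω → ℝ} (hX : ∀ i, MemLp (X i) 2 μ) :
    (Matrix.of fun i j => cov[X i, X j; μ]).PosSemidef := by
  cases nonempty_fintype ι
  refine .of_dotProduct_mulVec_nonneg (Matrix.IsHermitian.ext fun i j => covariance_comm _ _)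
    fun v => ?_
  have hvar : star v ⬝ᵥ (Matrix.of fun i j => cov[X i, X j; μ]) *ᵥ v =
      Var[fun ω => ∑ i, v i * X i ω; μ] := by
    rw [← covariance_self (memLp_finsetSum _ fun i _ => (hX i).const_mul (v i)).aemeasurable,
      covariance_fun_sum_fun_sum (fun i => (hX i).const_mul _) fun i => (hX i).const_mul _]
    simp only [dotProduct, mulVec, Finset.mul_sum, star_trivial, of_apply,
      covariance_const_mul_left, covariance_const_mul_right]
    exact Finset.sum_congr rfl fun i _ => Finset.sum_congr rfl fun j _ => by ring
  rw [hvar]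
  exact variance_nonneg _ _

lemma sq_apply_le_mul_of_posSemidef {ι : Type*} {S : Matrix ι ι ℝ} (hS : S.PosSemidef)
    (i j : ι) : S i j ^ 2 ≤ S i i * S j j := by
  have hdet := (hS.submatrix ![i, j]).det_nonneg
  have hsymm : S j i = S i j := (isHermitian_iff_isSymm.1 hS.isHermitian).apply i j
  simp only [det_fin_two, submatrix_apply, cons_val_zero, cons_val_one, hsymm] at hdet
  linarith [sq (S i j)]

lemma apply_mem_Icc_of_diag_eq_one {ι : Type*} {S : Matrix ι ι ℝ} (hS : S.PosSemidef) {i j : ι}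
    (hi : S i i = 1) (hj : S j j = 1) : S i j ∈ Set.Icc (-1 : ℝ) 1 := by
  have hsq := sq_apply_le_mul_of_posSemidef hS i j
  rw [hi, hj, one_mul] at hsq
  exact abs_le.1 ((sq_le_one_iff_abs_le_one _).1 hsq)

/-- `S.map g` is the covariance matrix of the variables `h(Z i)`, where `Z` is a centred Gaussian
vector with covariance matrix `S`. -/
lemma posSemidef_map_of_eq_covariance {ι : Type*} [Finite ι] {g h : ℝ → ℝ} {B : ℝ}
    (hh : Measurable h) (hB : ∀ x, ‖h x‖ ≤ B)
    (hg : ∀ ρ ∈ Set.Icc (-1 : ℝ) 1, g ρ = cov[fun p => h p.1, fun p => h p.2; bivariateGaussian ρ])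
    {S : Matrix ι ι ℝ} (hS : S.PosSemidef) (hdiag : ∀ i, S i i = 1) : (S.map g).PosSemidef := by
  classical
  cases nonempty_fintype ι
  have hmap : S.map g =
      Matrix.of fun i j => cov[fun x => h (x i), fun x => h (x j); multivariateGaussian 0 S] := by
    ext i j
    have hij : S i j ∈ Set.Icc (-1 : ℝ) 1 := apply_mem_Icc_of_diag_eq_one hS (hdiag i) (hdiag j)
    rw [map_apply, hg _ hij, ← map_multivariateGaussian_eq_bivariateGaussian hS (hdiag i)
      (hdiag j) hij]
    exact covariance_map_fun (X := h ∘ Prod.fst) (Y := h ∘ Prod.snd)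
      (hh.comp measurable_fst).aestronglyMeasurable (hh.comp measurable_snd).aestronglyMeasurable
      (by fun_prop)
  rw [hmap]
  exact posSemidef_covariance fun i =>
    .of_bound (Measurable.aestronglyMeasurable (by fun_prop)) B (ae_of_all _ fun x => hB _)

end CovarianceRepresentation

section CovarianceMap

variable (q : ℕ → ℝ) (K : ℕ) (k : Fin K)

lemma exists_fkfun_eq_covariance : ∃ (h : ℝ → ℝ) (B : ℝ), Measurable h ∧ (∀ x, ‖h x‖ ≤ B) ∧
    ∀ ρ ∈ Set.Icc (-1 : ℝ) 1,
      fkfun q K k ρ = cov[fun p => h p.1, fun p => h p.2; bivariateGaussian ρ] := by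
  have hmeas (i : ℕ) : Measurable ((Set.Iic (q i)).indicator (1 : ℝ → ℝ)) :=
    measurable_one.indicator measurableSet_Iic
  have hle (i : ℕ) (x : ℝ) : ‖(Set.Iic (q i)).indicator (1 : ℝ → ℝ) x‖ ≤ 1 :=
    (norm_indicator_le_norm_self _ _).trans_eq norm_one
  unfold fkfun
  split_ifs
  · exact ⟨_, 1, hmeas 1, hle 1, fun ρ hρ => rfun_eq_covariance q 1 1 hρ⟩
  · exact ⟨_, 1, hmeas _, hle _, fun ρ hρ => rfun_eq_covariance q _ _ hρ⟩
  · refine ⟨fun x => (Set.Iic (q (k + 1))).indicator 1 x - (Set.Iic (q k)).indicator 1 x, 1 + 1,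
      (hmeas _).sub (hmeas _), fun x => (norm_sub_le _ _).trans (add_le_add (hle _ x) (hle _ x)),
      fun ρ hρ => ?_⟩
    have hfst (i : ℕ) : MemLp (fun p : ℝ × ℝ => (Set.Iic (q i)).indicator (1 : ℝ → ℝ) p.1) 2
        (bivariateGaussian ρ) := memLp_indicator_one (measurable_fst measurableSet_Iic) 2
    have hsnd (i : ℕ) : MemLp (fun p : ℝ × ℝ => (Set.Iic (q i)).indicator (1 : ℝ → ℝ) p.2) 2
        (bivariateGaussian ρ) := memLp_indicator_one (measurable_snd measurableSet_Iic) 2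
    rw [covariance_fun_sub_fun_sub (hfst _) (hfst _) (hsnd _) (hsnd _),
      ← rfun_eq_covariance q _ _ hρ, ← rfun_eq_covariance q _ _ hρ, ← rfun_eq_covariance q _ _ hρ,
      ← rfun_eq_covariance q _ _ hρ, rfun_comm q (k + 1) k]
    ring

lemma hasDerivAt_rfun (i j : ℕ) {ρ : ℝ} (hρ : |ρ| < 1) :
    HasDerivAt (rfun q i j) (bivariateGaussianDensity (q i) (q j) ρ) ρ := by
  refine ((hasDerivAt_bivariateGaussianCDF (q i) (q j) hρ).sub_const
    (stdGaussianCDF (q i) * stdGaussianCDF (q j))).congr_of_eventuallyEq ?_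
  filter_upwards [continuous_abs.continuousAt.eventually_lt_const hρ] with r hr
  exact rfun_eq_bivariateGaussianCDF_sub q i j (abs_le.1 (le_of_lt hr))

lemma continuousWithinAt_rfun_one (i j : ℕ) :
    ContinuousWithinAt (rfun q i j) (Set.Icc (-1) 1) 1 := by
  have hone : (1 : ℝ) ∈ Set.Icc (-1 : ℝ) 1 := by simp
  exact ((continuousAt_bivariateGaussianCDF (q i) (q j) hone).sub
    continuousAt_const).continuousWithinAt.congr
      (fun ρ hρ => rfun_eq_bivariateGaussianCDF_sub q i j hρ)
      (rfun_eq_bivariateGaussianCDF_sub q i j hone)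

lemma exists_hasDerivAt_fkfun : ∃ g : ℝ → ℝ, DifferentiableAt ℝ g 0 ∧
    ∀ x, |x| < 1 → HasDerivAt (fkfun q K k) (g x) x := by
  have hdiff (i j : ℕ) := differentiableAt_bivariateGaussianDensity (q i) (q j)
  unfold fkfun
  split_ifs
  · exact ⟨_, hdiff 1 1, fun x hx => hasDerivAt_rfun q 1 1 hx⟩
  · exact ⟨_, hdiff _ _, fun x hx => hasDerivAt_rfun q _ _ hx⟩
  · exact ⟨_, ((hdiff _ _).add (hdiff _ _)).sub ((hdiff _ _).const_mul 2), fun x hx =>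
      ((hasDerivAt_rfun q _ _ hx).add (hasDerivAt_rfun q _ _ hx)).sub
        ((hasDerivAt_rfun q _ _ hx).const_mul 2)⟩

lemma continuousWithinAt_fkfun_one : ContinuousWithinAt (fkfun q K k) (Set.Icc (-1) 1) 1 := by
  have hr := continuousWithinAt_rfun_one q
  unfold fkfun
  split_ifs
  · exact hr 1 1
  · exact hr _ _
  · exact ((hr _ _).add (hr _ _)).sub (continuousWithinAt_const.mul (hr _ _))

lemma fkfun_zero : fkfun q K k 0 = 0 := by
  simp [fkfun, rfun]

variable {q K}

lemma rfun_one (i j : ℕ) :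
    rfun q i j 1 = min (stdGaussianCDF (q i)) (stdGaussianCDF (q j)) -
      stdGaussianCDF (q i) * stdGaussianCDF (q j) := by
  rw [rfun_eq_bivariateGaussianCDF_sub q i j (by simp), bivariateGaussianCDF_one]

lemma fkfun_one (hK : 2 ≤ K) (hq : ∀ m : ℕ, 0 < m → m < K → stdGaussianCDF (q m) = (m : ℝ) / K) :
    fkfun q K k 1 = ((K : ℝ) - 1) / K ^ 2 := by
  have : (0 : ℝ) < K := by positivity
  have hk := k.isLt
  simp only [fkfun, rfun_one]
  split_ifs
  · rw [hq 1 one_pos (by omega), min_self]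
    push_cast
    field_simp
  · rw [hq (K - 1) (by omega) (by omega), min_self, Nat.cast_sub (by omega)]
    push_cast
    field_simp
    ring
  · have hmono : stdGaussianCDF (q k) ≤ stdGaussianCDF (q (k + 1)) := by
      rw [hq k (by omega) hk, hq (k + 1) (by omega) (by omega)]
      gcongr
      simp
    rw [min_self, min_self, min_eq_left hmono, hq k (by omega) hk,
      hq (k + 1) (by omega) (by omega)]
    push_cast
    field_simp
    ring

lemma fresc_one (hK : 2 ≤ K) (hq : ∀ m : ℕ, 0 < m → m < K → stdGaussianCDF (q m) = (m : ℝ) / K) :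
    fresc q K k 1 = 1 := by
  have hK2 : (2 : ℝ) ≤ K := by exact_mod_cast hK
  have hK1 : (K : ℝ) - 1 ≠ 0 := by linarith
  rw [fresc, fkfun_one k hK hq]
  field_simp

variable (q)

lemma exists_abs_fresc_sub_le : ∃ C ≥ 0, ∃ δ > 0, ∀ x, |x| ≤ δ →
    |fresc q K k x - deriv (fresc q K k) 0 * x| ≤ C * x ^ 2 := by
  obtain ⟨g, hg, hderiv⟩ := exists_hasDerivAt_fkfun q K k
  have hfresc (x : ℝ) (hx : |x| < 1) :
      HasDerivAt (fresc q K k) ((K : ℝ) ^ 2 / ((K : ℝ) - 1) * g x) x :=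
    (hderiv x hx).const_mul _
  have hnear : ∀ᶠ x : ℝ in 𝓝 0, |x| < 1 :=
    continuous_abs.continuousAt.eventually_lt_const (by simp)
  have htaylor := exists_abs_sub_sub_mul_le_of_hasDerivAt (hnear.mono hfresc)
    (hg.const_mul ((K : ℝ) ^ 2 / ((K : ℝ) - 1))).hasDerivAt
  rw [← (hfresc 0 (by simp)).deriv] at htaylor
  simpa only [fresc, fkfun_zero, mul_zero, sub_zero] using htaylor

variable {q}

lemma exists_abs_fresc_sub_one_sub_le (hK : 2 ≤ K)
    (hq : ∀ m : ℕ, 0 < m → m < K → stdGaussianCDF (q m) = (m : ℝ) / K) (c : ℝ) {ε : ℝ}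
    (hε : 0 < ε) :
    ∃ η > 0, ∀ x, |x - 1| ≤ η → x ≤ 1 → |fresc q K k x - 1 - c * (x - 1)| ≤ ε := by
  have hcont : ContinuousWithinAt (fun x => fresc q K k x - 1 - c * (x - 1))
      (Set.Icc (-1) 1) 1 :=
    ((continuousWithinAt_const.mul (continuousWithinAt_fkfun_one q K k)).sub
      continuousWithinAt_const).sub (by fun_prop)
  obtain ⟨δ, hδ, hclose⟩ := Metric.continuousWithinAt_iff.1 hcont ε hε
  refine ⟨min (δ / 2) 1, by positivity, fun x hx hx1 => ?_⟩
  obtain ⟨hxδ, hx0⟩ := le_min_iff.1 hx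
  have hxlt := hclose ⟨by linarith [(abs_le.1 hx0).1], hx1⟩ (hxδ.trans_lt (half_lt_self hδ))
  simpa [Real.dist_eq, fresc_one k hK hq] using hxlt.le

lemma posSemidef_map_fresc (hK : 2 ≤ K) {ι : Type*} [Finite ι] {S : Matrix ι ι ℝ}
    (hS : S.PosSemidef) (hdiag : ∀ i, S i i = 1) : (S.map (fresc q K k)).PosSemidef := by
  obtain ⟨h, B, hmeas, hB, hcov⟩ := exists_fkfun_eq_covariance q K k
  have hscale : (0 : ℝ) ≤ (K : ℝ) ^ 2 / ((K : ℝ) - 1) :=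
    div_nonneg (by positivity) (sub_nonneg.2 (by exact_mod_cast one_le_two.trans hK))
  exact (posSemidef_map_of_eq_covariance hmeas hB hcov hS hdiag).smul hscale

end CovarianceMap

/-- **Entrywise matrix Taylor expansions of the Gaussianized covariance map.**
With `f = (K²/(K−1)) f_k` (so `f(0) = 0`, `f(1) = 1`) and `Σ⁽ⁿ⁾` in the correlation elliptope
with `Δ_n = Σ⁽ⁿ⁾ − I` and `‖Δ_n‖_op → 0`:
(i) `f(Σ⁽ⁿ⁾) = I + f′(0)Δ_n + O(‖Δ_n‖_op²)` in operator norm, and `‖f(Σ⁽ⁿ⁾)‖_op = O(1)`;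
(ii) `f(Σ⁽ⁿ⁾)` is positive semidefinite, and its positive semidefinite square root `Q_n`
(the unique PSD `Q` with `Q² = f(Σ⁽ⁿ⁾)`) satisfies
`Q_n = I + (1/2)f′(0)Δ_n + O(‖Δ_n‖_op²)`;
(iii) the entries of the PSD square root `P_n` of `Σ⁽ⁿ⁾` lie in `[−1,1]` and
`f(P_n) = I + (1/2)f′(0)Δ_n + R₃ₙ` with `‖R₃ₙ‖_op = o(1) + O(‖Δ_n‖_op²)`. -/
theorem entrywise_taylor_expansions
    (K : ℕ) (hK : 2 ≤ K) (k : Fin K)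
    (q : ℕ → ℝ) (hq : ∀ m : ℕ, 0 < m → m < K → stdGaussianCDF (q m) = (m : ℝ) / K)
    (S : ∀ nn : ℕ, Matrix (Fin nn) (Fin nn) ℝ)
    (hSpsd : ∀ nn, (S nn).PosSemidef) (hSdiag : ∀ nn (i : Fin nn), S nn i i = 1)
    (hSop : Tendsto (fun nn => opNorm (S nn - 1)) atTop (𝓝 0)) :
    ((∃ C : ℝ, ∀ᶠ nn in atTop,
        opNorm (entrywise (fresc q K k) (S nn) - 1 -
          deriv (fresc q K k) 0 • (S nn - 1)) ≤ C * opNorm (S nn - 1) ^ 2) ∧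
      ∃ C : ℝ, ∀ᶠ nn in atTop, opNorm (entrywise (fresc q K k) (S nn)) ≤ C) ∧
    ((∀ nn, (entrywise (fresc q K k) (S nn)).PosSemidef) ∧
      ∀ Q : ∀ nn : ℕ, Matrix (Fin nn) (Fin nn) ℝ,
        (∀ nn, (Q nn).PosSemidef ∧ Q nn * Q nn = entrywise (fresc q K k) (S nn)) →
        ∃ C : ℝ, ∀ᶠ nn in atTop,
          opNorm (Q nn - 1 - (deriv (fresc q K k) 0 / 2) • (S nn - 1)) ≤
            C * opNorm (S nn - 1) ^ 2) ∧
    ∀ P : ∀ nn : ℕ, Matrix (Fin nn) (Fin nn) ℝ,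
      (∀ nn, (P nn).PosSemidef ∧ P nn * P nn = S nn) →
      (∀ nn (i j : Fin nn), P nn i j ∈ Set.Icc (-1 : ℝ) 1) ∧
      ∃ C : ℝ, ∀ ε > (0 : ℝ), ∀ᶠ nn in atTop,
        opNorm (entrywise (fresc q K k) (P nn) - 1 -
          (deriv (fresc q K k) 0 / 2) • (S nn - 1)) ≤ ε + C * opNorm (S nn - 1) ^ 2 := by
  open scoped Matrix.Norms.L2Operator MatrixOrder in
  simp only [opNorm_eq_norm, entrywise_eq_map] at hSop ⊢
  obtain ⟨C, hC, δ, hδ, hzero⟩ := exists_abs_fresc_sub_le q k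
  set c := deriv (fresc q K k) 0
  have hnear (η : ℝ) (hη : 0 < η) : ∀ᶠ nn in atTop, ‖S nn - 1‖ ≤ η := hSop.eventually_le_const hη
  have hmap : ∀ᶠ nn in atTop,
      ‖(S nn).map (fresc q K k) - 1 - c • (S nn - 1)‖ ≤ C * ‖S nn - 1‖ ^ 2 := by
    filter_upwards [hnear δ hδ] with nn hS
    simpa using norm_map_sub_one_sub_smul_le hC hzero hS le_rfl fun i => by
      simp [hSdiag, fresc_one k hK hq]
  refine ⟨⟨⟨C, hmap⟩, C + |c| + 1, ?_⟩,
    ⟨fun nn => posSemidef_map_fresc k hK (hSpsd nn) (hSdiag nn),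
      fun Q hQ => ⟨(C + (C + |c|) ^ 2) / 2, ?_⟩⟩,
    fun P hP => ⟨fun nn i j => ?_, C + |c| / 2, fun ε hε => ?_⟩⟩
  · filter_upwards [hnear 1 one_pos, hmap] with nn hS hfS
    exact norm_le_of_norm_sub_one_sub_smul_le hC hS hfS
  · filter_upwards [hnear 1 one_pos, hmap] with nn hS hfS
    exact norm_sub_one_sub_half_smul_le_of_mul_self (hQ nn).1.nonneg hC hS ((hQ nn).2 ▸ hfS)
  · exact apply_mem_Icc_of_mul_self_apply_self_eq_one
      (isHermitian_iff_isSymm.1 (hP nn).1.isHermitian) ((hP nn).2 ▸ hSdiag nn i) j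
  · obtain ⟨η, hη, hone⟩ := exists_abs_fresc_sub_one_sub_le k hK hq c hε
    filter_upwards [hnear δ hδ, hnear η hη] with nn hSδ hSη
    obtain ⟨hPpsd, hPS⟩ := hP nn
    rw [← hPS] at hSδ hSη ⊢
    exact norm_map_sqrt_sub_one_sub_half_smul_le hPpsd (hPS ▸ hSdiag nn) hC hε.le hzero hone hSδ hSη

end
end

section
/- (Aronow–Samii-type variance bound.) For any uniform design with K treatment arms and any weight vector w ∈ ℝᴷ, with τ̂_w = Σ_k w_k τ̂_k, one has n·Var(τ̂_w) ≤ VB, where VB = (K²/n) Σ_{k=1}^{K} w_k² Σ_{i=1}^{n} Y_i(k)² Var(1{D_i = k}) + (K²/n) Σ_{k,l=1}^{K} w_k w_l Σ_{i ≠ j} Y_i(k) Y_j(l) Cov(1{D_i = k}, 1{D_j = l}) + (1/(2n)) Σ_{k ≠ l} |w_k||w_l| Σ_{i=1}^{n} (Y_i(k)² + Y_i(l)²). -/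
open MeasureTheory ProbabilityTheory Matrix
open scoped BigOperators ENNReal NNReal

noncomputable section

/-- Covariance of two real random variables on a measure space. -/
def cov {Ω : Type*} [MeasureSpace Ω] (U V : Ω → ℝ) : ℝ :=
  (∫ ω, U ω * V ω) - (∫ ω, U ω) * (∫ ω, V ω)

/-- Variance of a real random variable on a measure space. -/
def var {Ω : Type*} [MeasureSpace Ω] (U : Ω → ℝ) : ℝ :=
  ∫ ω, (U ω - ∫ ω', U ω') ^ 2

/-!
A unit receives exactly one arm, so the indicators of two distinct arms at the same unit have
covariance `-p_i(k) p_i(l)`, and inverse-propensity weighting turns it into the unidentifiable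
product `-Y_i(k) Y_i(l)`. The variance expands into these same-unit cross terms and the terms
of the bound that are kept exactly; each cross term is then bounded by AM-GM.
-/

lemma sum_sum_eq_sum_diag_add_sum_offDiag {ι M : Type*} [Fintype ι] [DecidableEq ι]
    [AddCommMonoid M] (f : ι → ι → M) :
    ∑ i, ∑ j, f i j = ∑ i, f i i + ∑ i, ∑ j, if i = j then 0 else f i j := by
  rw [← Finset.sum_add_distrib]
  refine Finset.sum_congr rfl fun i _ ↦ ?_
  rw [← Fintype.sum_ite_eq i (f i), ← Finset.sum_add_distrib]
  exact Finset.sum_congr rfl fun j _ ↦ by split_ifs <;> simp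

section Covariance

variable {Ω : Type*} [MeasurableSpace Ω] {μ : Measure Ω}

lemma memLp_indicator_one_s19 [IsFiniteMeasure μ] {A : Set Ω} (hA : MeasurableSet A) (q : ℝ≥0∞) :
    MemLp (A.indicator (1 : Ω → ℝ)) q μ :=
  memLp_indicator_const q hA 1 (.inr (measure_ne_top μ A))

lemma covariance_indicator_of_disjoint [IsProbabilityMeasure μ] {A B : Set Ω}
    (hA : MeasurableSet A) (hB : MeasurableSet B) (hAB : Disjoint A B) :
    cov[A.indicator 1, B.indicator 1; μ] = -(μ.real A * μ.real B) := by
  rw [covariance_eq_sub (memLp_indicator_one_s19 hA 2) (memLp_indicator_one_s19 hB 2),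
    ← Set.inter_indicator_one, hAB.inter_eq, Set.indicator_empty', integral_indicator_one hA,
    integral_indicator_one hB, integral_zero', zero_sub]

lemma variance_sum_sum [IsFiniteMeasure μ] {ι κ : Type*} [Fintype ι] [DecidableEq ι]
    [Fintype κ] [DecidableEq κ] {X : κ → ι → Ω → ℝ} (hX : ∀ k i, MemLp (X k i) 2 μ) :
    Var[fun ω ↦ ∑ k, ∑ i, X k i ω; μ] =
      ∑ k, ∑ i, Var[X k i; μ] +
        ∑ k, ∑ l, ∑ i, ∑ j, (if i = j then 0 else cov[X k i, X l j; μ]) +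
        ∑ k, ∑ l, if k = l then 0 else ∑ i, cov[X k i, X l i; μ] := by
  have hsum (k : κ) : MemLp (fun ω ↦ ∑ i, X k i ω) 2 μ := memLp_finsetSum _ fun i _ ↦ hX k i
  calc Var[fun ω ↦ ∑ k, ∑ i, X k i ω; μ]
    _ = ∑ k, ∑ l, ∑ i, ∑ j, cov[X k i, X l j; μ] := by
      rw [← covariance_self (memLp_finsetSum _ fun k _ ↦ hsum k).aemeasurable,
        covariance_fun_sum_fun_sum hsum hsum]
      simp only [covariance_fun_sum_fun_sum (hX _) (hX _)]
    _ = ∑ k, ∑ l, ∑ i, cov[X k i, X l i; μ] +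
          ∑ k, ∑ l, ∑ i, ∑ j, if i = j then 0 else cov[X k i, X l j; μ] := by
      simp only [sum_sum_eq_sum_diag_add_sum_offDiag fun i j ↦ cov[X _ i, X _ j; μ],
        Finset.sum_add_distrib]
    _ = _ := by
      rw [sum_sum_eq_sum_diag_add_sum_offDiag fun k l ↦ ∑ i, cov[X k i, X l i; μ],
        add_right_comm]
      simp only [covariance_self (hX _ _).aemeasurable]

end Covariance

section Design

variable {Ω ι κ : Type*} [DecidableEq κ]

/-- The `{0, 1}`-valued treatment indicator `1{D_i = k}` of arm `k` at unit `i`, as a real random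
variable. -/
def armIndicator (D : Ω → ι → κ) (k : κ) (i : ι) : Ω → ℝ :=
  fun ω ↦ if D ω i = k then 1 else 0

/-- The Horvitz–Thompson estimator of the mean outcome of arm `k`, for a design `D` in which unit
`i` receives arm `k` with probability `p k i`. Potential outcomes are indexed by arm first, so
that `Y k i` is `Y_i(k)`. -/
def horvitzThompson [Fintype ι] (D : Ω → ι → κ) (p Y : κ → ι → ℝ) (k : κ) : Ω → ℝ :=
  fun ω ↦ (Fintype.card ι : ℝ)⁻¹ * ∑ i, Y k i / p k i * armIndicator D k i ω

lemma armIndicator_eq_indicator (D : Ω → ι → κ) (k : κ) (i : ι) :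
    armIndicator D k i = {ω | D ω i = k}.indicator 1 := by
  ext ω
  simp [armIndicator, Set.indicator_apply]

variable [MeasurableSpace Ω] {μ : Measure Ω} [MeasurableSpace κ] [MeasurableSingletonClass κ]
  {D : Ω → ι → κ}

lemma measurable_armIndicator {i : ι} (hD : Measurable (D · i)) (k : κ) :
    Measurable (armIndicator D k i) :=
  .ite (hD (measurableSet_singleton k)) measurable_const measurable_const

lemma memLp_armIndicator [IsFiniteMeasure μ] {i : ι} (hD : Measurable (D · i)) (k : κ)
    (q : ℝ≥0∞) : MemLp (armIndicator D k i) q μ := by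
  rw [armIndicator_eq_indicator]
  exact memLp_indicator_one_s19 (hD (measurableSet_singleton k)) q

lemma covariance_armIndicator_of_ne [IsProbabilityMeasure μ] {i : ι} (hD : Measurable (D · i))
    {k l : κ} (hkl : k ≠ l) :
    cov[armIndicator D k i, armIndicator D l i; μ] =
      -(μ.real {ω | D ω i = k} * μ.real {ω | D ω i = l}) := by
  rw [armIndicator_eq_indicator, armIndicator_eq_indicator]
  refine covariance_indicator_of_disjoint (hD (measurableSet_singleton k))
    (hD (measurableSet_singleton l)) (Set.disjoint_left.2 fun ω hk hl ↦ hkl ?_)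
  exact hk.symm.trans hl

variable [Fintype ι]

lemma measurable_horvitzThompson (hD : ∀ i, Measurable (D · i)) (p Y : κ → ι → ℝ) (k : κ) :
    Measurable (horvitzThompson D p Y k) := by
  have hX (i : ι) : Measurable (armIndicator D k i) := measurable_armIndicator (hD i) k
  unfold horvitzThompson
  fun_prop

variable [DecidableEq ι] [Fintype κ]

lemma variance_weighted_sum_armIndicator [IsFiniteMeasure μ] (hD : ∀ i, Measurable (D · i))
    (w : κ → ℝ) (a : κ → ι → ℝ) :
    Var[fun ω ↦ ∑ k, w k * ∑ i, a k i * armIndicator D k i ω; μ] =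
      ∑ k, w k ^ 2 * ∑ i, a k i ^ 2 * Var[armIndicator D k i; μ] +
        ∑ k, ∑ l, w k * w l * ∑ i, ∑ j,
          (if i = j then 0 else
            a k i * a l j * cov[armIndicator D k i, armIndicator D l j; μ]) +
        ∑ k, ∑ l, if k = l then 0 else
          w k * w l * ∑ i, a k i * a l i * cov[armIndicator D k i, armIndicator D l i; μ] := by
  have cov_scaled (k l : κ) (i j : ι) :
      cov[fun ω ↦ w k * a k i * armIndicator D k i ω,
        fun ω ↦ w l * a l j * armIndicator D l j ω; μ] =
      w k * w l * (a k i * a l j * cov[armIndicator D k i, armIndicator D l j; μ]) := by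
    rw [covariance_const_mul_left, covariance_const_mul_right]
    ring
  have expand := variance_sum_sum (μ := μ)
    (X := fun k i ω ↦ w k * a k i * armIndicator D k i ω)
    fun k i ↦ (memLp_armIndicator (hD i) k 2).const_mul _
  simp only [variance_const_mul, cov_scaled] at expand
  simpa only [Finset.mul_sum, mul_ite, mul_zero, mul_pow, mul_assoc] using expand

end Design

lemma neg_mul_mul_mul_le_abs_mul_abs_mul (a b x y : ℝ) :
    -(a * b * (x * y)) ≤ |a| * |b| * ((x ^ 2 + y ^ 2) / 2) := by
  calc -(a * b * (x * y)) ≤ |a| * |b| * (|x| * |y|) := by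
        simpa only [abs_mul] using neg_le_abs (a * b * (x * y))
    _ ≤ |a| * |b| * ((x ^ 2 + y ^ 2) / 2) := by
        gcongr
        rw [← sq_abs x, ← sq_abs y]
        linarith [two_mul_le_add_sq |x| |y|]

theorem aronow_samii_variance_bound_general
    {Ω ι κ : Type*} [MeasurableSpace Ω] {μ : Measure Ω} [IsProbabilityMeasure μ]
    [Fintype ι] [DecidableEq ι] [Nonempty ι]
    [Fintype κ] [DecidableEq κ] [MeasurableSpace κ] [MeasurableSingletonClass κ]
    {D : Ω → ι → κ} (hD : ∀ i, Measurable (D · i))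
    {p : κ → ι → ℝ} (hp : ∀ k i, μ.real {ω | D ω i = k} = p k i) (hp0 : ∀ k i, p k i ≠ 0)
    (Y : κ → ι → ℝ) (w : κ → ℝ) :
    Fintype.card ι * Var[fun ω ↦ ∑ k, w k * horvitzThompson D p Y k ω; μ] ≤
      (Fintype.card ι : ℝ)⁻¹ * ∑ k, w k ^ 2 * ∑ i,
          (Y k i / p k i) ^ 2 * Var[armIndicator D k i; μ] +
        (Fintype.card ι : ℝ)⁻¹ * ∑ k, ∑ l, w k * w l * ∑ i, ∑ j,
          (if i = j then 0 else Y k i / p k i * (Y l j / p l j) *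
            cov[armIndicator D k i, armIndicator D l j; μ]) +
        1 / (2 * Fintype.card ι : ℝ) * ∑ k, ∑ l,
          (if k = l then 0 else |w k| * |w l| * ∑ i, (Y k i ^ 2 + Y l i ^ 2)) := by
  have rescale : Fintype.card ι * Var[fun ω ↦ ∑ k, w k * horvitzThompson D p Y k ω; μ] =
      (Fintype.card ι : ℝ)⁻¹ *
        Var[fun ω ↦ ∑ k, w k * ∑ i, Y k i / p k i * armIndicator D k i ω; μ] := by
    simp only [horvitzThompson, mul_left_comm (w _), ← Finset.mul_sum, variance_const_mul]
    field_simp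
  have cross_term {k l : κ} (hkl : k ≠ l) (i : ι) :
      Y k i / p k i * (Y l i / p l i) * cov[armIndicator D k i, armIndicator D l i; μ] =
        -(Y k i * Y l i) := by
    rw [covariance_armIndicator_of_ne (hD i) hkl, hp, hp]
    field_simp [hp0 k i, hp0 l i]
  have cross_terms_le :
      ∑ k, ∑ l, (if k = l then 0 else w k * w l * ∑ i,
        Y k i / p k i * (Y l i / p l i) * cov[armIndicator D k i, armIndicator D l i; μ]) ≤
      2⁻¹ * ∑ k, ∑ l, if k = l then 0 else |w k| * |w l| * ∑ i, (Y k i ^ 2 + Y l i ^ 2) := by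
    simp only [Finset.mul_sum (s := (Finset.univ : Finset κ)), mul_ite, mul_zero]
    gcongr with k _ l _
    split_ifs with hkl
    · rfl
    · simp only [cross_term hkl, Finset.mul_sum]
      refine Finset.sum_le_sum fun i _ ↦ ?_
      linarith [neg_mul_mul_mul_le_abs_mul_abs_mul (w k) (w l) (Y k i) (Y l i)]
  have half_card_inv : 1 / (2 * Fintype.card ι : ℝ) = (Fintype.card ι : ℝ)⁻¹ * 2⁻¹ := by
    field_simp
  rw [rescale, variance_weighted_sum_armIndicator hD, half_card_inv, mul_assoc _ 2⁻¹, mul_add,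
    mul_add]
  gcongr

section MeasureSpace

variable {Ω : Type*} [MeasureSpace Ω] {U V : Ω → ℝ}

lemma var_eq_variance (hU : AEMeasurable U) : var U = Var[U] :=
  (variance_eq_integral hU).symm

lemma cov_eq_covariance [IsProbabilityMeasure (volume : Measure Ω)]
    (hU : MemLp U 2) (hV : MemLp V 2) : cov U V = cov[U, V] :=
  (covariance_eq_sub hU hV).symm

end MeasureSpace

/-- **Aronow–Samii-type variance bound.** For any uniform design with `K`
treatment arms and any weight vector `w`, `n · Var(τ̂_w) ≤ VB` with
`VB = (K²/n) Σ_k w_k² Σ_i Y_i(k)² Var(1{D_i=k})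
 + (K²/n) Σ_{k,l} w_k w_l Σ_{i≠j} Y_i(k) Y_j(l) Cov(1{D_i=k}, 1{D_j=l})
 + (1/(2n)) Σ_{k≠l} |w_k||w_l| Σ_i (Y_i(k)² + Y_i(l)²)`. -/
theorem aronow_samii_variance_bound
    {Ω : Type*} [MeasureSpace Ω] [IsProbabilityMeasure (volume : Measure Ω)]
    (n K : ℕ) (hn : 0 < n) (hK : 2 ≤ K)
    (D : Ω → Fin n → Fin K) (hD : Measurable D)
    (hunif : ∀ (i : Fin n) (k : Fin K), volume {ω | D ω i = k} = (K : ℝ≥0∞)⁻¹)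
    (Y : Fin K → Fin n → ℝ) (w : Fin K → ℝ) :
    (n : ℝ) * var (fun ω =>
        ∑ k, w k * ((K : ℝ) / n * ∑ i, (if D ω i = k then Y k i else 0))) ≤
      (K : ℝ) ^ 2 / n * ∑ k, (w k) ^ 2 * ∑ i, (Y k i) ^ 2 *
          var (fun ω => if D ω i = k then (1 : ℝ) else 0) +
        (K : ℝ) ^ 2 / n * ∑ k, ∑ l, w k * w l * ∑ i, ∑ j,
          (if i = j then 0 else Y k i * Y l j *
            cov (fun ω => if D ω i = k then (1 : ℝ) else 0)
                (fun ω => if D ω j = l then (1 : ℝ) else 0)) +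
        1 / (2 * (n : ℝ)) * ∑ k, ∑ l,
          (if k = l then 0 else |w k| * |w l| * ∑ i, ((Y k i) ^ 2 + (Y l i) ^ 2)) := by
  have : NeZero n := ⟨hn.ne'⟩
  have hDi (i : Fin n) : Measurable (D · i) := hD.eval
  have hX (k : Fin K) (i : Fin n) : MemLp (armIndicator D k i) 2 := memLp_armIndicator (hDi i) k 2
  have hτ (k : Fin K) : Measurable (horvitzThompson D (fun _ _ ↦ (K : ℝ)⁻¹) Y k) :=
    measurable_horvitzThompson hDi _ Y k
  have hp (k : Fin K) (i : Fin n) : volume.real {ω | D ω i = k} = (K : ℝ)⁻¹ := by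
    simp [measureReal_def, hunif]
  have bound := aronow_samii_variance_bound_general hDi hp
    (fun _ _ ↦ inv_ne_zero (by positivity)) Y w
  rw [← var_eq_variance (by fun_prop)] at bound
  simp only [← cov_eq_covariance (hX _ _) (hX _ _), ← var_eq_variance (hX _ _).aemeasurable,
    div_inv_eq_mul, Fintype.card_fin] at bound
  unfold horvitzThompson armIndicator at bound
  convert bound using 2
  · simp [Finset.mul_sum, div_eq_inv_mul, mul_assoc, mul_comm (K : ℝ)]
  · simp only [Finset.mul_sum, mul_ite, mul_zero]
    ring_nf

end
end
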